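/- arXiv:1006.0497 — 4 statements merged into one kernel-verified Lean document; each statement's English description precedes it below -/
import Mathlib

section
/- Let A, A', A'' be commutative rings and f : A' → A, g : A'' → A ring homomorphisms such that g is surjective and its kernel is nilpotent. Let B := {(x,y) ∈ A' × A'' : f(x) = g(y)} be the fibered product ring, a subring of A' × A''. Let M' be a flat A'-module, M'' a flat A''-module, and let α : A ⊗_{A'} M' → A ⊗_{A''} M'' be an isomorphism of A-modules, where A is an A'-algebra via f and an A''-algebra via g. Define N := {(m', m'') ∈ M' × M'' : α(1 ⊗ m') = 1 ⊗ m''}, a B-submodule of M' × M'' for the action obtained by restricting scalars along the inclusion B ⊆ A' × A''. Then: (1) N is a flat B-module; (2) the A'-linear map A' ⊗_B N → M' induced by (m', m'') ↦ m' is bijective; (3) the A''-linear map A'' ⊗_B N → M'' induced by (m', m'') ↦ m'' is bijective. -/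
/-!
Let `I` be the kernel of `B → A'` and `J` the kernel of `A'' → A`. Since `A'' → A` is surjective, so
is `B → A'`, and the projection `B → A''` maps `I = 0 × J` isomorphically onto `J`; in particular
`I` is nilpotent.

* Left map. `N → M'` is surjective with kernel `0 × J M''`. The image of `N` in `M''` spans `M''`
  over `A''`: it does so modulo `J M''`, and it contains `J M''`. Hence `0 × J M'' = I N` and
  `A' ⊗ N = N / I N ≃ M'` (`liftBaseChange_bijective_of_surjective`).
* Right map. `A'' ⊗ N → M''` is surjective, and it becomes `α` after `A ⊗ -`, by the left case
  (`lTensor_liftBaseChange_injective`). As `M''` is flat, the kernel `K` satisfies `K = J K`, and so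
  vanishes by nilpotency of `J` (`injective_of_lTensor_injective`).
* Flatness. By the local criterion for a nilpotent ideal (`flat_of_nilpotent`), it is enough that
  `N / I N ≃ M'` is flat over `B / I ≃ A'` and that `I ⊗ N → N` is injective. The latter holds since
  `I ⊗[B] N ≃ J ⊗[A''] M''` embeds into `M''` (`ideal_rTensor_injective`).
-/

open TensorProduct

set_option synthInstance.maxHeartbeats 1000000
set_option maxHeartbeats 1000000

section FiberProduct

variable (A A' A'' : Type*) [CommRing A] [CommRing A'] [CommRing A'']
variable [Algebra A' A] [Algebra A'' A]

/-- The fibered product `B = A' ×_A A''` of rings, as a subring of `A' × A''`. -/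
def fiberProduct : Subring (A' × A'') where
  carrier := {p | algebraMap A' A p.1 = algebraMap A'' A p.2}
  zero_mem' := by simp
  one_mem' := by simp
  add_mem' := by
    intro p q hp hq
    simp only [Set.mem_setOf_eq, Prod.fst_add, Prod.snd_add, map_add] at *
    rw [hp, hq]
  mul_mem' := by
    intro p q hp hq
    simp only [Set.mem_setOf_eq, Prod.fst_mul, Prod.snd_mul, map_mul] at *
    rw [hp, hq]
  neg_mem' := by
    intro p hp
    simp only [Set.mem_setOf_eq, Prod.fst_neg, Prod.snd_neg, map_neg] at *
    rw [hp]

noncomputable instance : Algebra (fiberProduct A A' A'') A' :=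
  ((RingHom.fst A' A'').comp (fiberProduct A A' A'').subtype).toAlgebra

noncomputable instance : Algebra (fiberProduct A A' A'') A'' :=
  ((RingHom.snd A' A'').comp (fiberProduct A A' A'').subtype).toAlgebra

variable (M' M'' : Type*) [AddCommGroup M'] [Module A' M'] [AddCommGroup M''] [Module A'' M'']

noncomputable instance : Module (fiberProduct A A' A'') M' :=
  Module.compHom M' (algebraMap (fiberProduct A A' A'') A')

noncomputable instance : Module (fiberProduct A A' A'') M'' :=
  Module.compHom M'' (algebraMap (fiberProduct A A' A'') A'')

instance : IsScalarTower (fiberProduct A A' A'') A' M' :=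
  IsScalarTower.of_algebraMap_smul fun _ _ => rfl

instance : IsScalarTower (fiberProduct A A' A'') A'' M'' :=
  IsScalarTower.of_algebraMap_smul fun _ _ => rfl

end FiberProduct

section Glue

variable {A A' A'' : Type*} [CommRing A] [CommRing A'] [CommRing A'']
variable [Algebra A' A] [Algebra A'' A]
variable {M' M'' : Type*} [AddCommGroup M'] [Module A' M'] [AddCommGroup M''] [Module A'' M'']

/-- The glued module `N = {(m', m'') : α(1 ⊗ m') = 1 ⊗ m''}`, a `B`-submodule of
`M' × M''`. -/
noncomputable def gluedModule (α : (A ⊗[A'] M') ≃ₗ[A] (A ⊗[A''] M'')) :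
    Submodule (fiberProduct A A' A'') (M' × M'') where
  carrier := {p | α (1 ⊗ₜ p.1) = 1 ⊗ₜ p.2}
  zero_mem' := by simp [TensorProduct.tmul_zero]
  add_mem' := by
    intro p q hp hq
    simp only [Set.mem_setOf_eq, Prod.fst_add, Prod.snd_add, TensorProduct.tmul_add,
      map_add] at *
    rw [hp, hq]
  smul_mem' := by
    intro b p hp
    simp only [Set.mem_setOf_eq] at hp ⊢
    show α ((1 : A) ⊗ₜ[A'] (((b : A' × A'').1) • p.1)) =
      (1 : A) ⊗ₜ[A''] (((b : A' × A'').2) • p.2)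
    rw [TensorProduct.tmul_smul, TensorProduct.tmul_smul,
      ← algebraMap_smul A ((b : A' × A'').1) ((1 : A) ⊗ₜ[A'] p.1),
      ← algebraMap_smul A ((b : A' × A'').2) ((1 : A) ⊗ₜ[A''] p.2),
      map_smul, hp, b.2]

end Glue

section Maps

variable {A A' A'' : Type*} [CommRing A] [CommRing A'] [CommRing A'']
variable [Algebra A' A] [Algebra A'' A]
variable {M' M'' : Type*} [AddCommGroup M'] [Module A' M'] [AddCommGroup M''] [Module A'' M'']

/-- The natural `A'`-linear map `A' ⊗_B N → M'` induced by `(m', m'') ↦ m'`. -/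
noncomputable def gluedMapLeft (α : (A ⊗[A'] M') ≃ₗ[A] (A ⊗[A''] M'')) :
    (A' ⊗[fiberProduct A A' A''] ↥(gluedModule α)) →ₗ[A'] M' :=
  LinearMap.liftBaseChange A'
    ((LinearMap.fst (fiberProduct A A' A'') M' M'').comp (gluedModule α).subtype)

/-- The natural `A''`-linear map `A'' ⊗_B N → M''` induced by `(m', m'') ↦ m''`. -/
noncomputable def gluedMapRight (α : (A ⊗[A'] M') ≃ₗ[A] (A ⊗[A''] M'')) :
    (A'' ⊗[fiberProduct A A' A''] ↥(gluedModule α)) →ₗ[A''] M'' :=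
  LinearMap.liftBaseChange A''
    ((LinearMap.snd (fiberProduct A A' A'') M' M'').comp (gluedModule α).subtype)

end Maps

/-! ### Local criterion of flatness for a nilpotent ideal -/

section LocalCriterion
variable {R S N : Type*} [CommRing R] [CommRing S] [Algebra R S] [AddCommGroup N] [Module R N]

/-- If `S ⊗[R] N` is flat over `S`, then `- ⊗[R] N` preserves injections of `S`-modules, since
`Q ⊗[R] N ≃ Q ⊗[S] (S ⊗[R] N)` for every `S`-module `Q`. -/
lemma rTensor_injective_of_flat_baseChange [Module.Flat S (S ⊗[R] N)]
    {Q : Type*} [AddCommGroup Q] [Module R Q] [Module S Q] [IsScalarTower R S Q]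
    (X : Submodule S Q) :
    Function.Injective ((X.subtype.restrictScalars R).rTensor N) := by
  have h := Module.Flat.rTensor_preserves_injective_linearMap (M := S ⊗[R] N) X.subtype
    X.injective_subtype
  let e₁ := AlgebraTensorModule.cancelBaseChange R S S X N
  let e₂ := AlgebraTensorModule.cancelBaseChange R S S Q N
  have hcomm : ∀ x, (X.subtype.restrictScalars R).rTensor N x =
      e₂ (X.subtype.rTensor (S ⊗[R] N) (e₁.symm x)) := by
    intro x
    induction x with
    | zero => simp
    | add x y hx hy => simp only [map_add, hx, hy]
    | tmul x n => simp [e₁, e₂]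
  intro x y hxy
  rw [hcomm, hcomm] at hxy
  exact e₁.symm.injective (h (e₂.injective hxy))

/-- If `I ⊗ N → N` is injective and `F` is flat, then `(I ⊗ F) ⊗ N → F ⊗ N` is injective, being
`F ⊗ -` applied to `I ⊗ N → N`. -/
lemma mul_rTensor_injective {I : Ideal R} (hI : Function.Injective (I.subtype.rTensor N))
    (F : Type*) [AddCommGroup F] [Module R F] [Module.Flat R F] :
    Function.Injective (((TensorProduct.lid R F).toLinearMap ∘ₗ I.subtype.rTensor F).rTensor N) := by
  have h := Module.Flat.lTensor_preserves_injective_linearMap (M := F) _ hI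
  let e₁ : (I ⊗[R] F) ⊗[R] N ≃ₗ[R] F ⊗[R] (I ⊗[R] N) :=
    (TensorProduct.comm R I F).rTensor N ≪≫ₗ TensorProduct.assoc R F I N
  let e₂ : F ⊗[R] (R ⊗[R] N) ≃ₗ[R] F ⊗[R] N := (TensorProduct.lid R N).lTensor F
  have hcomm : ((TensorProduct.lid R F).toLinearMap ∘ₗ I.subtype.rTensor F).rTensor N =
      e₂.toLinearMap ∘ₗ (I.subtype.rTensor N).lTensor F ∘ₗ e₁.toLinearMap := by
    ext i y n
    simp [e₁, e₂, TensorProduct.smul_tmul']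
  rw [hcomm]
  exact e₂.injective.comp (h.comp e₁.injective)

/-- The inclusion of `X` into a flat module `F` with `F ⧸ X` killed by `I = ker (R → S)` stays
injective after `- ⊗ N`: compare `I ⊗ F → X → X̄`, where `X̄` is the image of `X` in
`S ⊗ F`, with the same sequence for `F`. -/
lemma rTensor_injective_of_flat [Module.Flat S (S ⊗[R] N)]
    (hS : Function.Surjective (algebraMap R S))
    (hI : Function.Injective ((RingHom.ker (algebraMap R S)).subtype.rTensor N))
    {F : Type*} [AddCommGroup F] [Module R F] [Module.Flat R F] (X : Submodule R F)
    (hX : RingHom.ker (algebraMap R S) • (⊤ : Submodule R F) ≤ X) :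
    Function.Injective (X.subtype.rTensor N) := by
  set I := RingHom.ker (algebraMap R S) with hIdef
  let μ : I ⊗[R] F →ₗ[R] F := (TensorProduct.lid R F).toLinearMap ∘ₗ I.subtype.rTensor F
  let π : F →ₗ[R] S ⊗[R] F := TensorProduct.mk R S F 1
  have hμX : ∀ w, μ w ∈ X := by
    intro w
    induction w with
    | zero => simp
    | add x y hx hy => rw [map_add]; exact add_mem hx hy
    | tmul i y =>
      simpa [μ] using hX (Submodule.smul_mem_smul i.2 (Submodule.mem_top (x := y)))
  let j : I ⊗[R] F →ₗ[R] X := μ.codRestrict X hμX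
  let Xbar : Submodule S (S ⊗[R] F) :=
    { carrier := {z | ∃ x ∈ X, π x = z}
      zero_mem' := ⟨0, X.zero_mem, map_zero _⟩
      add_mem' := by
        rintro _ _ ⟨x, hx, rfl⟩ ⟨y, hy, rfl⟩
        exact ⟨x + y, add_mem hx hy, map_add _ _ _⟩
      smul_mem' := by
        rintro s _ ⟨x, hx, rfl⟩
        obtain ⟨r, rfl⟩ := hS s
        exact ⟨r • x, X.smul_mem r hx, by rw [map_smul, algebraMap_smul]⟩ }
  let q : X →ₗ[R] Xbar := LinearMap.codRestrict (Xbar.restrictScalars R) (π ∘ₗ X.subtype)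
    fun x => ⟨x, x.2, rfl⟩
  have hq : Function.Surjective q := by
    rintro ⟨_, x, hx, rfl⟩
    exact ⟨⟨x, hx⟩, rfl⟩
  have hex : Function.Exact (I.subtype.rTensor F) ((Algebra.linearMap R S).rTensor F) := by
    refine rTensor_exact F ?_ hS
    intro r
    simp [hIdef, RingHom.mem_ker]
  have hjq : Function.Exact j q := by
    intro x
    have h1 : q x = 0 ↔ (Algebra.linearMap R S).rTensor F ((TensorProduct.lid R F).symm x) = 0 := by
      have h0 : q x = 0 ↔ π x = 0 := Subtype.ext_iff
      rw [h0]
      simp [π]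
    rw [h1, hex]
    constructor
    · rintro ⟨w, hw⟩
      refine ⟨w, Subtype.ext ?_⟩
      simp [j, μ, hw]
    · rintro ⟨w, rfl⟩
      exact ⟨w, by simp [j, μ]⟩
  have hT : Function.Exact (j.rTensor N) (q.rTensor N) :=
    rTensor_exact (N := X) (P := Xbar) N hjq hq
  rw [injective_iff_map_eq_zero]
  intro x hx
  have hqx : q.rTensor N x = 0 := by
    apply rTensor_injective_of_flat_baseChange (R := R) (S := S) (N := N) Xbar
    rw [map_zero]
    have h : Xbar.subtype.restrictScalars R ∘ₗ q = π ∘ₗ X.subtype := rfl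
    rw [← LinearMap.rTensor_comp_apply, h, LinearMap.rTensor_comp_apply, hx, map_zero]
  obtain ⟨w, rfl⟩ := (hT x).1 hqx
  have hw : μ.rTensor N w = 0 := by
    have h : X.subtype ∘ₗ j = μ := rfl
    rw [← h, LinearMap.rTensor_comp_apply, hx]
  rw [(injective_iff_map_eq_zero _).1 (mul_rTensor_injective hI F) w hw, map_zero]

/-- The same as `rTensor_injective_of_flat` for an arbitrary ambient module `Y`, by pulling `X` back
to a free module surjecting onto `Y`. In other words, `Tor₁(Q, N) = 0` whenever `Q` is killed by
`ker (R → S)`. -/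
lemma rTensor_injective_of_smul_le [Module.Flat S (S ⊗[R] N)]
    (hS : Function.Surjective (algebraMap R S))
    (hI : Function.Injective ((RingHom.ker (algebraMap R S)).subtype.rTensor N))
    {Y : Type*} [AddCommGroup Y] [Module R Y] (X : Submodule R Y)
    (hX : RingHom.ker (algebraMap R S) • (⊤ : Submodule R Y) ≤ X) :
    Function.Injective (X.subtype.rTensor N) := by
  let π : (Y →₀ R) →ₗ[R] Y := Finsupp.linearCombination R id
  have hπ : Function.Surjective π := Finsupp.linearCombination_id_surjective R Y
  let X' := X.comap π
  have hX' : Function.Injective (X'.subtype.rTensor N) := by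
    refine rTensor_injective_of_flat hS hI X' (le_trans ?_ (Submodule.comap_mono hX))
    rw [← Submodule.map_le_iff_le_comap, Submodule.map_smul'']
    exact Submodule.smul_mono le_rfl le_top
  let ρ : X' →ₗ[R] X := π.restrict fun _ h => h
  have hρ : Function.Surjective ρ := by
    rintro ⟨x, hx⟩
    obtain ⟨y, rfl⟩ := hπ x
    exact ⟨⟨y, hx⟩, rfl⟩
  let k : LinearMap.ker π →ₗ[R] X' := Submodule.inclusion fun y (hy : π y = 0) => by
    change π y ∈ X
    rw [hy]
    exact X.zero_mem
  have hex : Function.Exact ((LinearMap.ker π).subtype.rTensor N) (π.rTensor N) :=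
    rTensor_exact (M := LinearMap.ker π) N (LinearMap.exact_subtype_ker_map π) hπ
  rw [injective_iff_map_eq_zero]
  intro x hx
  obtain ⟨x', rfl⟩ := LinearMap.rTensor_surjective N hρ x
  have h1 : π.rTensor N (X'.subtype.rTensor N x') = 0 := by
    have h : π ∘ₗ X'.subtype = X.subtype ∘ₗ ρ := rfl
    rw [← LinearMap.rTensor_comp_apply, h, LinearMap.rTensor_comp_apply, hx]
  obtain ⟨w, hw⟩ := (hex _).1 h1
  have h2 : k.rTensor N w = x' := by
    apply hX'
    have h : X'.subtype ∘ₗ k = (LinearMap.ker π).subtype := rfl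
    rw [← hw, ← LinearMap.rTensor_comp_apply, h]
  rw [← h2, ← LinearMap.rTensor_comp_apply]
  have : ρ ∘ₗ k = 0 := by
    ext ⟨y, hy⟩
    exact hy
  rw [this, LinearMap.rTensor_zero, LinearMap.zero_apply]

/-- Dévissage along `X ⊆ X + Iᵏ Y ⊆ Y`, whose lower quotient is killed by `I` and whose upper
quotient is killed by `Iᵏ`. -/
lemma rTensor_injective_of_pow_smul_le [Module.Flat S (S ⊗[R] N)]
    (hS : Function.Surjective (algebraMap R S))
    (hI : Function.Injective ((RingHom.ker (algebraMap R S)).subtype.rTensor N))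
    {Y : Type*} [AddCommGroup Y] [Module R Y] (k : ℕ) (X : Submodule R Y)
    (hX : RingHom.ker (algebraMap R S) ^ k • (⊤ : Submodule R Y) ≤ X) :
    Function.Injective (X.subtype.rTensor N) := by
  induction k generalizing X with
  | zero =>
    rw [pow_zero, Ideal.one_eq_top, Submodule.top_smul, top_le_iff] at hX
    exact (LinearEquiv.ofTop X hX).rTensor N |>.injective
  | succ k ih =>
    set I := RingHom.ker (algebraMap R S)
    let Z := X ⊔ I ^ k • (⊤ : Submodule R Y)
    have hXZ : X ≤ Z := le_sup_left
    have h1 := ih Z le_sup_right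
    have h2 : Function.Injective ((X.submoduleOf Z).subtype.rTensor N) := by
      apply rTensor_injective_of_smul_le hS hI
      rw [Submodule.submoduleOf, ← Submodule.map_le_iff_le_comap, Submodule.map_smul'',
        Submodule.map_top, Submodule.range_subtype, Submodule.smul_sup, sup_le_iff]
      refine ⟨Submodule.smul_le_right, ?_⟩
      rwa [← Submodule.mul_smul, ← pow_succ']
    let e := (Submodule.submoduleOfEquivOfLe hXZ).symm
    have h3 : X.subtype = Z.subtype ∘ₗ (X.submoduleOf Z).subtype ∘ₗ e.toLinearMap := by
      ext x
      rfl
    rw [h3, LinearMap.rTensor_comp, LinearMap.rTensor_comp]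
    exact h1.comp (h2.comp (e.rTensor N).injective)

/-- Local criterion of flatness for a nilpotent ideal: `N` is flat over `R` if `S ⊗ N` is flat over
`S = R ⧸ I` and `I ⊗ N → N` is injective. -/
theorem flat_of_nilpotent [Module.Flat S (S ⊗[R] N)]
    (hS : Function.Surjective (algebraMap R S))
    (hnil : IsNilpotent (RingHom.ker (algebraMap R S)))
    (hI : Function.Injective ((RingHom.ker (algebraMap R S)).subtype.rTensor N)) :
    Module.Flat R N := by
  obtain ⟨k, hk⟩ := hnil
  rw [Module.Flat.iff_rTensor_injective']
  intro 𝔞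
  exact rTensor_injective_of_pow_smul_le hS hI k 𝔞 (by simp [hk])

end LocalCriterion

/-! ### Base change along a surjection -/

section Surjection
variable {R S N M : Type*} [CommRing R] [CommRing S] [Algebra R S] [AddCommGroup N] [Module R N]
  [AddCommGroup M] [Module R M] [Module S M] [IsScalarTower R S M]

lemma exists_one_tmul_eq (hS : Function.Surjective (algebraMap R S)) (z : S ⊗[R] N) :
    ∃ n : N, (1 : S) ⊗ₜ[R] n = z := by
  induction z with
  | zero => exact ⟨0, by simp⟩
  | add x y hx hy =>
    obtain ⟨m, rfl⟩ := hx
    obtain ⟨n, rfl⟩ := hy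
    exact ⟨m + n, TensorProduct.tmul_add _ _ _⟩
  | tmul s n =>
    obtain ⟨r, rfl⟩ := hS s
    exact ⟨r • n, by rw [← TensorProduct.smul_tmul, Algebra.algebraMap_eq_smul_one]⟩

lemma mem_smul_top_of_one_tmul_eq_zero (hS : Function.Surjective (algebraMap R S)) {n : N}
    (hn : (1 : S) ⊗ₜ[R] n = 0) : n ∈ RingHom.ker (algebraMap R S) • (⊤ : Submodule R N) := by
  set I := RingHom.ker (algebraMap R S) with hI
  have hex : Function.Exact (I.subtype.rTensor N) ((Algebra.linearMap R S).rTensor N) := by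
    refine rTensor_exact (M := I) N ?_ hS
    intro r
    simp [hI, RingHom.mem_ker]
  obtain ⟨w, hw⟩ := (hex (1 ⊗ₜ n)).1 (by simpa using hn)
  have hn' : TensorProduct.lid R N (I.subtype.rTensor N w) = n := by
    rw [hw]
    simp
  rw [← hn']
  clear hw hn'
  induction w with
  | zero => simp
  | add x y hx hy =>
    rw [map_add, map_add]
    exact add_mem hx hy
  | tmul j y => simpa using Submodule.smul_mem_smul j.2 (Submodule.mem_top (x := y))

lemma liftBaseChange_bijective_of_surjective (hS : Function.Surjective (algebraMap R S))
    (p : N →ₗ[R] M) (hp : Function.Surjective p)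
    (hker : LinearMap.ker p ≤ RingHom.ker (algebraMap R S) • ⊤) :
    Function.Bijective (p.liftBaseChange S) := by
  have hzero : RingHom.ker (algebraMap R S) • (⊤ : Submodule R N) ≤
      LinearMap.ker (TensorProduct.mk R S N 1) := by
    rw [Submodule.smul_le]
    intro r hr n _
    rw [LinearMap.mem_ker, TensorProduct.mk_apply, ← TensorProduct.smul_tmul,
      ← Algebra.algebraMap_eq_smul_one, (RingHom.mem_ker).1 hr, TensorProduct.zero_tmul]
  constructor
  · rw [injective_iff_map_eq_zero]
    intro z hz
    obtain ⟨n, rfl⟩ := exists_one_tmul_eq hS z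
    exact hzero (hker (by simpa using hz))
  · intro m
    obtain ⟨n, rfl⟩ := hp m
    exact ⟨1 ⊗ₜ n, by simp⟩

/-- A surjection onto a flat module that becomes injective modulo a nilpotent ideal `J` is injective:
by flatness its kernel `K` satisfies `K = J K`, hence `K = 0`. -/
lemma injective_of_lTensor_injective {A P Q : Type*} [CommRing A] [Algebra S A]
    [AddCommGroup P] [Module S P] [AddCommGroup Q] [Module S Q] [Module.Flat S Q]
    (hA : Function.Surjective (algebraMap S A))
    (hnil : IsNilpotent (RingHom.ker (algebraMap S A)))
    (φ : P →ₗ[S] Q) (hφ : Function.Surjective φ) (h : Function.Injective (φ.lTensor A)) :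
    Function.Injective φ := by
  set J := RingHom.ker (algebraMap S A) with hJ
  have hinj := LinearMap.lTensor_injective_of_exact_of_flat φ hφ (LinearMap.ker φ).subtype
    (Submodule.injective_subtype _) (LinearMap.exact_subtype_ker_map φ) A
  have hzero : ∀ z : A ⊗[S] LinearMap.ker φ, z = 0 := by
    intro z
    apply hinj
    apply h
    have hc : φ ∘ₗ (LinearMap.ker φ).subtype = 0 := LinearMap.comp_ker_subtype φ
    rw [← LinearMap.lTensor_comp_apply, hc]
    simp
  have hJK : (⊤ : Submodule S (LinearMap.ker φ)) ≤ J • ⊤ :=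
    fun k _ => mem_smul_top_of_one_tmul_eq_zero hA (hzero _)
  have hpow : ∀ n : ℕ, (⊤ : Submodule S (LinearMap.ker φ)) ≤ J ^ n • ⊤ := by
    intro n
    induction n with
    | zero => simp
    | succ n ih =>
      rw [pow_succ, Submodule.mul_smul]
      exact ih.trans (Submodule.smul_mono le_rfl hJK)
  obtain ⟨n, hn⟩ := hnil
  rw [← LinearMap.ker_eq_bot, Submodule.eq_bot_iff]
  intro x hx
  have := hpow n (Submodule.mem_top (x := ⟨x, hx⟩))
  rw [hn] at this
  simpa using this

end Surjection

/-! ### Gluing over a cartesian square -/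

section Cartesian
variable {R A S' S'' N M' M'' : Type*} [CommRing R] [CommRing A] [CommRing S'] [CommRing S'']
  [Algebra R S'] [Algebra R S''] [Algebra S' A] [Algebra S'' A]
  [AddCommGroup N] [Module R N]
  [AddCommGroup M'] [Module R M'] [Module S' M'] [IsScalarTower R S' M']
  [AddCommGroup M''] [Module R M''] [Module S'' M''] [IsScalarTower R S'' M'']

/-- Modulo `ker (S'' → A)`, the map `S'' ⊗ N → M''` is the composite
`A ⊗[R] N ≃ A ⊗[S'] (S' ⊗[R] N) ≃ A ⊗[S'] M' ≃ A ⊗[S''] M''`. -/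
lemma lTensor_liftBaseChange_injective
    (hsq : ∀ r : R, algebraMap S' A (algebraMap R S' r) = algebraMap S'' A (algebraMap R S'' r))
    (p' : N →ₗ[R] M') (p'' : N →ₗ[R] M'') (α : (A ⊗[S'] M') ≃ₗ[A] (A ⊗[S''] M''))
    (hα : ∀ n, α (1 ⊗ₜ p' n) = 1 ⊗ₜ p'' n)
    (h' : Function.Bijective (p'.liftBaseChange S')) :
    Function.Injective ((p''.liftBaseChange S'').lTensor A) := by
  let _ : Algebra R A := ((algebraMap S' A).comp (algebraMap R S')).toAlgebra
  have : IsScalarTower R S' A := IsScalarTower.of_algebraMap_eq fun _ => rfl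
  have : IsScalarTower R S'' A := IsScalarTower.of_algebraMap_eq fun r => hsq r
  let e₁ : A ⊗[S''] (S'' ⊗[R] N) ≃ₗ[A] A ⊗[R] N :=
    AlgebraTensorModule.cancelBaseChange R S'' A A N
  let e₂ : A ⊗[S'] (S' ⊗[R] N) ≃ₗ[A] A ⊗[R] N :=
    AlgebraTensorModule.cancelBaseChange R S' A A N
  let e₃ : A ⊗[S'] (S' ⊗[R] N) ≃ₗ[S'] A ⊗[S'] M' :=
    (LinearEquiv.ofBijective (p'.liftBaseChange S') h').lTensor A
  have hcomm : ∀ x, (p''.liftBaseChange S'').lTensor A x = α (e₃ (e₂.symm (e₁ x))) := by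
    intro x
    induction x with
    | zero => simp
    | add x y hx hy => simp only [map_add, hx, hy]
    | tmul a z =>
      induction z with
      | zero => simp
      | add x y hx hy => simp only [map_add, TensorProduct.tmul_add, hx, hy]
      | tmul s n =>
        have h1 : α ((s • a) ⊗ₜ p' n) = (s • a) ⊗ₜ p'' n := by
          have h2 := congrArg ((s • a) • ·) (hα n)
          simpa [← map_smul, TensorProduct.smul_tmul'] using h2
        simp [e₁, e₂, e₃, h1, TensorProduct.smul_tmul]
  intro x y hxy
  rw [hcomm, hcomm] at hxy
  exact e₁.injective (e₂.symm.injective (e₃.injective (α.injective hxy)))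

/-- If `R → S''` maps `I` isomorphically onto the ideal `J` and `S'' ⊗ N ≃ M''` is flat, then
`I ⊗[R] N ≃ J ⊗[S''] M''`, and the latter embeds into `M''`; hence `I ⊗ N → N` is injective. -/
lemma ideal_rTensor_injective [Module.Flat S'' M''] (p'' : N →ₗ[R] M'')
    (h'' : Function.Bijective (p''.liftBaseChange S'')) (I : Ideal R) (J : Ideal S'')
    (hIJ : ∀ r ∈ I, algebraMap R S'' r ∈ J)
    (hinj : ∀ r ∈ I, algebraMap R S'' r = 0 → r = 0)
    (hsurj : ∀ s ∈ J, ∃ r ∈ I, algebraMap R S'' r = s) :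
    Function.Injective (I.subtype.rTensor N) := by
  let c₀ : I →ₗ[R] J := LinearMap.codRestrict (J.restrictScalars R)
    (Algebra.linearMap R S'' ∘ₗ I.subtype) fun r => hIJ r r.2
  have hc₀ : Function.Bijective c₀ := by
    constructor
    · rw [injective_iff_map_eq_zero]
      intro r hr
      exact Subtype.ext (hinj r r.2 (congrArg Subtype.val hr))
    · rintro ⟨s, hs⟩
      obtain ⟨r, hr, rfl⟩ := hsurj s hs
      exact ⟨⟨r, hr⟩, rfl⟩
  let c : I ≃ₗ[R] J := LinearEquiv.ofBijective c₀ hc₀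
  have hc : ∀ r, (c r : S'') = algebraMap R S'' r := fun _ => rfl
  let e₁ : I ⊗[R] N ≃ₗ[R] J ⊗[R] N := c.rTensor N
  let e₂ : J ⊗[S''] (S'' ⊗[R] N) ≃ₗ[S''] J ⊗[R] N :=
    AlgebraTensorModule.cancelBaseChange R S'' S'' J N
  let e₃ : J ⊗[S''] (S'' ⊗[R] N) ≃ₗ[S''] J ⊗[S''] M'' :=
    (LinearEquiv.ofBijective (p''.liftBaseChange S'') h'').lTensor J
  have hJ := Module.Flat.rTensor_preserves_injective_linearMap (M := M'') J.subtype
    J.injective_subtype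
  have hcomm : ∀ x, p'' (TensorProduct.lid R N (I.subtype.rTensor N x)) =
      TensorProduct.lid S'' M'' (J.subtype.rTensor M'' (e₃ (e₂.symm (e₁ x)))) := by
    intro x
    induction x with
    | zero => simp
    | add x y hx hy => simp only [map_add, hx, hy]
    | tmul r n => simp [e₁, e₂, e₃, hc]
  intro x y hxy
  have h := congrArg (fun z => p'' (TensorProduct.lid R N z)) hxy
  simp only [hcomm] at h
  exact e₁.injective (e₂.symm.injective (e₃.injective (hJ
    ((TensorProduct.lid S'' M'').injective h))))

/-- The gluing theorem for an abstract cartesian square `R = S' ×_A S''` of rings and an abstract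
cartesian square `N = M' ×_{A ⊗ M''} M''` of modules. Working with unbundled `R` and `N` avoids the
two competing `R`-module structures that `A` would inherit from `S'` and from `S''`. -/
theorem glue_of_cartesian
    (hsurj : Function.Surjective (algebraMap S'' A))
    (hnil : IsNilpotent (RingHom.ker (algebraMap S'' A)))
    [Module.Flat S' M'] [Module.Flat S'' M'']
    (hsq : ∀ r : R, algebraMap S' A (algebraMap R S' r) = algebraMap S'' A (algebraMap R S'' r))
    (hR : ∀ r : R, algebraMap R S' r = 0 → algebraMap R S'' r = 0 → r = 0)
    (hcart : ∀ (s' : S') (s'' : S''), algebraMap S' A s' = algebraMap S'' A s'' →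
      ∃ r : R, algebraMap R S' r = s' ∧ algebraMap R S'' r = s'')
    (p' : N →ₗ[R] M') (p'' : N →ₗ[R] M'') (α : (A ⊗[S'] M') ≃ₗ[A] (A ⊗[S''] M''))
    (hα : ∀ n, α (1 ⊗ₜ p' n) = 1 ⊗ₜ p'' n)
    (hN : ∀ n, p' n = 0 → p'' n = 0 → n = 0)
    (hNcart : ∀ m' m'', α (1 ⊗ₜ m') = 1 ⊗ₜ m'' → ∃ n, p' n = m' ∧ p'' n = m'') :
    Module.Flat R N ∧ Function.Bijective (p'.liftBaseChange S') ∧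
      Function.Bijective (p''.liftBaseChange S'') := by
  set J := RingHom.ker (algebraMap S'' A) with hJ
  set I := RingHom.ker (algebraMap R S') with hI
  have hS' : Function.Surjective (algebraMap R S') := by
    intro s'
    obtain ⟨s'', hs⟩ := hsurj (algebraMap S' A s')
    obtain ⟨r, hr, -⟩ := hcart s' s'' hs.symm
    exact ⟨r, hr⟩
  have hIJ : ∀ r ∈ I, algebraMap R S'' r ∈ J := by
    intro r hr
    rw [hJ, RingHom.mem_ker, ← hsq, (RingHom.mem_ker).1 hr, map_zero]
  have hIinj : ∀ r ∈ I, algebraMap R S'' r = 0 → r = 0 := fun r hr => hR r ((RingHom.mem_ker).1 hr)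
  have hIsurj : ∀ s ∈ J, ∃ r ∈ I, algebraMap R S'' r = s := by
    intro s hs
    obtain ⟨r, hr, hr'⟩ := hcart 0 s (by rw [map_zero, (RingHom.mem_ker).1 hs])
    exact ⟨r, (RingHom.mem_ker).2 hr, hr'⟩
  have hInil : IsNilpotent I := by
    obtain ⟨n, hn⟩ := hnil
    refine ⟨n + 1, ?_⟩
    rw [Ideal.zero_eq_bot, Submodule.eq_bot_iff]
    intro r hr
    refine hIinj r (Ideal.pow_le_self n.succ_ne_zero hr) ?_
    have h1 : (I.map (algebraMap R S'')) ^ n ≤ J ^ n :=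
      Ideal.pow_right_mono (Ideal.map_le_iff_le_comap.2 hIJ) n
    have h2 := Ideal.mem_map_of_mem (algebraMap R S'') (Ideal.pow_le_pow_right n.le_succ hr)
    rw [Ideal.map_pow] at h2
    simpa [hn] using h1 h2
  have hp' : Function.Surjective p' := by
    intro m'
    obtain ⟨m'', h⟩ := exists_one_tmul_eq hsurj (α (1 ⊗ₜ m'))
    obtain ⟨n, hn, -⟩ := hNcart m' m'' h.symm
    exact ⟨n, hn⟩
  have hspan : Submodule.span S'' (Set.range p'') = ⊤ := by
    set T := Submodule.span S'' (Set.range p'') with hT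
    -- If `1 ⊗ m'' = 0`, then the pair `(0, m'')` comes from `N`.
    have hker : ∀ m'' : M'', (1 : A) ⊗ₜ[S''] m'' = 0 → m'' ∈ T := by
      intro m'' h
      obtain ⟨n, -, hn⟩ := hNcart 0 m'' (by simp [h])
      exact Submodule.subset_span ⟨n, hn⟩
    have happ : ∀ z : A ⊗[S'] M', ∃ t ∈ T, 1 ⊗ₜ t = α z := by
      intro z
      induction z with
      | zero => exact ⟨0, T.zero_mem, by simp⟩
      | add x y hx hy =>
        obtain ⟨m, hm, hm'⟩ := hx
        obtain ⟨n, hn, hn'⟩ := hy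
        exact ⟨m + n, add_mem hm hn, by rw [TensorProduct.tmul_add, hm', hn', map_add]⟩
      | tmul a m' =>
        obtain ⟨s, rfl⟩ := hsurj a
        obtain ⟨n, rfl⟩ := hp' m'
        refine ⟨s • p'' n, T.smul_mem s (Submodule.subset_span ⟨n, rfl⟩), ?_⟩
        have h1 : (algebraMap S'' A s) ⊗ₜ[S'] p' n = algebraMap S'' A s • (1 ⊗ₜ[S'] p' n) := by
          rw [TensorProduct.smul_tmul', smul_eq_mul, mul_one]
        rw [h1, map_smul, hα, TensorProduct.tmul_smul, algebraMap_smul]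
    rw [eq_top_iff]
    intro m'' _
    obtain ⟨t, ht, h⟩ := happ (α.symm (1 ⊗ₜ m''))
    rw [α.apply_symm_apply] at h
    have h2 := add_mem (hker (m'' - t) (by rw [TensorProduct.tmul_sub, h, sub_self])) ht
    rwa [sub_add_cancel] at h2
  -- `J M''` is the image of `I N`: since `N` spans `M''` over `S''`, it consists of sums of
  -- elements `j • p'' n` with `j` in `J`, and each such `j` lifts to `I`.
  have hlow : ∀ m'' ∈ J • (⊤ : Submodule S'' M''), ∃ n ∈ I • (⊤ : Submodule R N),
      p' n = 0 ∧ p'' n = m'' := by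
    intro m'' hm
    rw [← hspan] at hm
    refine Submodule.smul_induction_on hm ?_ ?_
    · intro j hj t ht
      induction ht using Submodule.span_induction generalizing j with
      | zero => exact ⟨0, zero_mem _, by simp, by simp⟩
      | add x y _ _ hx hy =>
        obtain ⟨a, ha, ha', ha''⟩ := hx j hj
        obtain ⟨b, hb, hb', hb''⟩ := hy j hj
        exact ⟨a + b, add_mem ha hb, by simp [ha', hb'], by simp [ha'', hb'']⟩
      | smul s x hx ih =>
        obtain ⟨a, ha, ha', ha''⟩ := ih (j * s) (J.mul_mem_right s hj)
        exact ⟨a, ha, ha', by rw [ha'', mul_smul]⟩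
      | mem x hx =>
        obtain ⟨n, rfl⟩ := hx
        obtain ⟨r, hr, rfl⟩ := hIsurj j hj
        refine ⟨r • n, Submodule.smul_mem_smul hr Submodule.mem_top, ?_, ?_⟩
        · rw [map_smul, ← algebraMap_smul S', (RingHom.mem_ker).1 hr, zero_smul]
        · rw [map_smul, algebraMap_smul]
    · rintro _ _ ⟨a, ha, ha', rfl⟩ ⟨b, hb, hb', rfl⟩
      exact ⟨a + b, add_mem ha hb, by simp [ha', hb'], map_add _ _ _⟩
  have hker : LinearMap.ker p' ≤ I • ⊤ := by
    intro n hn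
    have hn0 : p' n = 0 := hn
    have h1 : (1 : A) ⊗ₜ[S''] p'' n = 0 := by rw [← hα, hn0]; simp
    have h2 : p'' n ∈ J • (⊤ : Submodule S'' M'') :=
      mem_smul_top_of_one_tmul_eq_zero hsurj h1
    obtain ⟨m, hm, hm', hm''⟩ := hlow _ h2
    have : n - m = 0 := hN _ (by simp [hn0, hm']) (by simp [hm''])
    rwa [sub_eq_zero.1 this]
  have hleft := liftBaseChange_bijective_of_surjective hS' p' hp' hker
  have hright : Function.Bijective (p''.liftBaseChange S'') := by
    have hs : Function.Surjective (p''.liftBaseChange S'') := by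
      rw [← LinearMap.range_eq_top, LinearMap.range_liftBaseChange, ← hspan]
      rfl
    exact ⟨injective_of_lTensor_injective hsurj hnil _ hs
      (lTensor_liftBaseChange_injective hsq p' p'' α hα hleft), hs⟩
  have : Module.Flat S' (S' ⊗[R] N) :=
    Module.Flat.of_linearEquiv (LinearEquiv.ofBijective _ hleft)
  exact ⟨flat_of_nilpotent hS' hInil (ideal_rTensor_injective p'' hright I J hIJ hIinj hIsurj),
    hleft, hright⟩

end Cartesian

theorem flat_modules_glue
    (A A' A'' : Type*) [CommRing A] [CommRing A'] [CommRing A'']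
    [Algebra A' A] [Algebra A'' A]
    (hsurj : Function.Surjective (algebraMap A'' A))
    (hnil : IsNilpotent (RingHom.ker (algebraMap A'' A)))
    (M' M'' : Type*) [AddCommGroup M'] [Module A' M'] [AddCommGroup M''] [Module A'' M'']
    [Module.Flat A' M'] [Module.Flat A'' M'']
    (α : (A ⊗[A'] M') ≃ₗ[A] (A ⊗[A''] M'')) :
    Module.Flat (fiberProduct A A' A'') ↥(gluedModule α) ∧
    Function.Bijective (gluedMapLeft α) ∧
    Function.Bijective (gluedMapRight α) := by
  refine glue_of_cartesian (R := fiberProduct A A' A'') (N := gluedModule α) hsurj hnil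
    (fun r => r.2) (fun r h' h'' => Subtype.ext (Prod.ext h' h''))
    (fun s' s'' h => ⟨⟨(s', s''), h⟩, rfl, rfl⟩)
    ((LinearMap.fst (fiberProduct A A' A'') M' M'').comp (gluedModule α).subtype)
    ((LinearMap.snd (fiberProduct A A' A'') M' M'').comp (gluedModule α).subtype)
    α (fun n => n.2) (fun n h' h'' => Subtype.ext (Prod.ext h' h''))
    (fun m' m'' h => ⟨⟨(m', m''), h⟩, rfl, rfl⟩)
end

section
/- Let π : A' → A be a surjective homomorphism in (Art_Λ). Let R be a commutative Λ-algebra that is flat as a Λ-module, and set R_A := R ⊗_Λ A and R_{A'} := R ⊗_Λ A'. Let f₁, …, f_r ∈ R_A be a regular sequence in the localized sense such that R_A/(f₁, …, f_r) is flat as an A-module. Let J' be an ideal of R_{A'} such that R_{A'}/J' is flat as an A'-module and the image of J' under the natural map R_{A'} → R_A is the ideal (f₁, …, f_r). Then for any elements f'₁, …, f'_r ∈ J' whose images in R_A are f₁, …, f_r (such elements exist), the ideal J' is generated by f'₁, …, f'_r. -/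
/-!
Let `I = ker (A' → A)`; it is nilpotent, and `I R_{A'} = ker (R_{A'} → R_A)`. Let `L ≤ J'` be the
ideal generated by the lifts. Since `L` and `J'` have the same image in `R_A`,
`J' ≤ L + (J' ∩ I R_{A'})`. Flatness of `R_{A'}/J'` over `A'` gives `J' ∩ I R_{A'} = I J'`
(`inf_map_le_map_mul_of_flat_quotient`), so `J' = L + I J'`, and Nakayama's lemma for the nilpotent
ideal `I` (`le_of_le_sup_mul_of_isNilpotent`) gives `J' = L`.
-/

open TensorProduct IsLocalRing

set_option synthInstance.maxHeartbeats 1000000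
set_option maxHeartbeats 1000000

/-- A list of elements of a commutative ring is a regular sequence "in the localized
sense" if its image in the localization at every prime containing it is a (weakly)
regular sequence in the usual sense. -/
def IsLocalizedRegular {T : Type*} [CommRing T] (l : List T) : Prop :=
  ∀ (p : Ideal T) [p.IsPrime], Ideal.span {x | x ∈ l} ≤ p →
    RingTheory.Sequence.IsWeaklyRegular (Localization.AtPrime p)
      (l.map (algebraMap T (Localization.AtPrime p)))

attribute [local instance] Algebra.TensorProduct.rightAlgebra

section Setup

variable (Λ : Type*) [CommRing Λ]
variable (A A' : Type*) [CommRing A] [CommRing A']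
variable [Algebra Λ A] [Algebra Λ A'] [Algebra A' A] [IsScalarTower Λ A' A]
variable (R : Type*) [CommRing R] [Algebra Λ R]

/-- The natural map `R_{A'} = R ⊗_Λ A' → R ⊗_Λ A = R_A`. -/
noncomputable def tensorHom : (R ⊗[Λ] A') →ₐ[Λ] (R ⊗[Λ] A) :=
  Algebra.TensorProduct.map (AlgHom.id Λ R) (IsScalarTower.toAlgHom Λ A' A)

noncomputable instance (priority := 50) : Algebra A' (R ⊗[Λ] A) :=
  ((algebraMap A (R ⊗[Λ] A)).comp (algebraMap A' A)).toAlgebra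

end Setup

/-- Nakayama's lemma for a nilpotent ideal, without finiteness assumptions. -/
lemma le_of_le_sup_mul_of_isNilpotent {S : Type*} [CommRing S] {I J L : Ideal S}
    (hI : IsNilpotent I) (h : J ≤ L ⊔ I * J) : J ≤ L := by
  obtain ⟨n, hn⟩ := hI
  have key : ∀ m : ℕ, J ≤ L ⊔ I ^ m * J := by
    intro m
    induction m with
    | zero => simp
    | succ m ih =>
      calc J ≤ L ⊔ I * J := h
        _ ≤ L ⊔ I * (L ⊔ I ^ m * J) := by gcongr
        _ = L ⊔ (I * L ⊔ I ^ (m + 1) * J) := by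
          rw [Ideal.mul_sup, pow_succ', mul_assoc]
        _ ≤ L ⊔ I ^ (m + 1) * J :=
          sup_le le_sup_left
            (sup_le ((Ideal.mul_le_right : I * L ≤ L).trans le_sup_left) le_sup_right)
  simpa [hn] using key n

/-- The vanishing of `Tor₁(B/I, S/J)` for flat `S/J`, expressed on ideals: `J ∩ I S ≤ I J`. -/
lemma inf_map_le_map_mul_of_flat_quotient {B S : Type*} [CommRing B] [CommRing S] [Algebra B S]
    (I : Ideal B) (J : Ideal S) [Module.Flat B (S ⧸ J)] :
    J ⊓ I.map (algebraMap B S) ≤ I.map (algebraMap B S) * J := by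
  have h := LinearMap.ker_inf_smul_top_eq_smul_of_flat I (Ideal.Quotient.mkₐ B J).toLinearMap
    (Ideal.Quotient.mkₐ_surjective B J)
  have hk : (Ideal.Quotient.mkₐ B J).toLinearMap.ker = J.restrictScalars B := by
    ext x
    simp [Ideal.Quotient.eq_zero_iff_mem]
  rw [hk, Ideal.smul_top_eq_map, ← Ideal.smul_restrictScalars] at h
  intro x hx
  have hxmem : x ∈ J.restrictScalars B ⊓ (I.map (algebraMap B S)).restrictScalars B := hx
  rw [h] at hxmem
  exact hxmem

/-- **Statement 3.**  Let `π : A' → A` be a surjection in `(Art_Λ)`, `R` a flat `Λ`-algebra,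
`f₁, …, f_r` a regular sequence (in the localized sense) in `R_A` with `R_A/(f₁, …, f_r)`
flat over `A`, and `J'` an ideal of `R_{A'}` with `R_{A'}/J'` flat over `A'` whose image in
`R_A` is `(f₁, …, f_r)`.  Then elements of `J'` lifting `f₁, …, f_r` exist, and any such
elements generate `J'`. -/
theorem lifted_ideal_generated_by_lifts
    (Λ : Type*) [CommRing Λ] [IsNoetherianRing Λ] [IsLocalRing Λ]
    [IsAdicComplete (maximalIdeal Λ) Λ]
    (A A' : Type*) [CommRing A] [CommRing A'] [IsArtinianRing A] [IsArtinianRing A']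
    [IsLocalRing A] [IsLocalRing A'] [Algebra Λ A] [Algebra Λ A']
    [IsLocalHom (algebraMap Λ A)] [IsLocalHom (algebraMap Λ A')]
    (hresA : Function.Bijective (ResidueField.map (algebraMap Λ A)))
    (hresA' : Function.Bijective (ResidueField.map (algebraMap Λ A')))
    [Algebra A' A] [IsScalarTower Λ A' A]
    (hπ : Function.Surjective (algebraMap A' A))
    (R : Type*) [CommRing R] [Algebra Λ R] [Module.Flat Λ R]
    (l : List (R ⊗[Λ] A))
    (hreg : IsLocalizedRegular l)
    (hflat : Module.Flat A ((R ⊗[Λ] A) ⧸ Ideal.span {x | x ∈ l}))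
    (J' : Ideal (R ⊗[Λ] A'))
    (hflat' : Module.Flat A' ((R ⊗[Λ] A') ⧸ J'))
    (himage : J'.map (tensorHom Λ A A' R) = Ideal.span {x | x ∈ l}) :
    (∃ l' : List (R ⊗[Λ] A'),
        (∀ x ∈ l', x ∈ J') ∧ l'.map (tensorHom Λ A A' R) = l) ∧
    (∀ l' : List (R ⊗[Λ] A'),
        (∀ x ∈ l', x ∈ J') → l'.map (tensorHom Λ A A' R) = l →
        Ideal.span {x | x ∈ l'} = J') := by
  have hsurj : Function.Surjective (tensorHom Λ A A' R) :=
    LinearMap.lTensor_surjective R hπ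
  refine ⟨?_, ?_⟩
  · have hl : ∀ y ∈ l, ∃ x ∈ J', tensorHom Λ A A' R x = y := by
      intro y hy
      have : y ∈ J'.map (tensorHom Λ A A' R) := himage ▸ Ideal.subset_span hy
      exact (Ideal.mem_map_iff_of_surjective _ hsurj).1 this
    choose! g hg hgy using hl
    refine ⟨l.map g, ?_, ?_⟩
    · intro x hx
      obtain ⟨y, hy, rfl⟩ := List.mem_map.1 hx
      exact hg y hy
    · rw [List.map_map]
      exact (List.map_congr_left hgy).trans (List.map_id l)
  · intro l' hl' hmap
    refine le_antisymm (Ideal.span_le.2 hl') ?_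
    set I : Ideal A' := RingHom.ker (algebraMap A' A)
    have hker : RingHom.ker (tensorHom Λ A A' R) = I.map (algebraMap A' (R ⊗[Λ] A')) :=
      Algebra.TensorProduct.lTensor_ker (IsScalarTower.toAlgHom Λ A' A) hπ
    have hInil : IsNilpotent (I.map (algebraMap A' (R ⊗[Λ] A'))) := by
      obtain ⟨n, hn⟩ := IsArtinianRing.isNilpotent_jacobson_bot (R := A')
      have hI : I ≤ (⊥ : Ideal A').jacobson := by
        rw [IsLocalRing.jacobson_eq_maximalIdeal _ bot_ne_top]
        exact IsLocalRing.le_maximalIdeal (RingHom.ker_ne_top _)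
      have hIn : I ^ n = ⊥ := eq_bot_iff.2 ((Ideal.pow_right_mono hI n).trans hn.le)
      exact ⟨n, by rw [← Ideal.map_pow, hIn, Ideal.map_bot, Ideal.zero_eq_bot]⟩
    refine le_of_le_sup_mul_of_isNilpotent hInil ?_
    have hspan : (Ideal.span {x | x ∈ l'}).map (tensorHom Λ A A' R) = Ideal.span {x | x ∈ l} := by
      rw [Ideal.map_span, ← hmap]
      congr 1
      ext y
      simp
    intro x hx
    have hxl : tensorHom Λ A A' R x ∈ (Ideal.span {x | x ∈ l'}).map (tensorHom Λ A A' R) := by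
      rw [hspan, ← himage]
      exact Ideal.mem_map_of_mem _ hx
    obtain ⟨y, hy, hyx⟩ := (Ideal.mem_map_iff_of_surjective _ hsurj).1 hxl
    have hz : x - y ∈ I.map (algebraMap A' (R ⊗[Λ] A')) * J' := by
      refine inf_map_le_map_mul_of_flat_quotient I J' ⟨sub_mem hx (Ideal.span_le.2 hl' hy), ?_⟩
      rw [← hker]
      simp [RingHom.mem_ker, hyx]
    have := add_mem (Ideal.mem_sup_left hy) (Ideal.mem_sup_right hz)
    simpa using this
end

section
/- Let R be an object of (Comp_Λ). Then the following are equivalent: (a) there exist a natural number n and an isomorphism of Λ-algebras R ≅ Λ⟦x₁, …, x_n⟧; (b) for every surjective homomorphism A' → A in (Art_Λ) and every Λ-algebra homomorphism R → A, there exists a Λ-algebra homomorphism R → A' lifting it (i.e. whose composite with A' → A is the given homomorphism). -/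
/-!
Write `S = Λ⟦x₁, …, xₙ⟧`, with maximal ideal `m_S`.

The ring `S` has the lifting property because a homomorphism from `S` to an Artinian local ring
kills a high power of the ideal of variables, so it is determined by the images of the variables;
these are lifted to nonunits of `A'`, and power series can be evaluated there
(`exists_algHom_X`, `powerSeries_lift`).

Conversely, let `R` have the lifting property, and let `φ : S → R` send the variables to a minimal
system of generators of `m_R` modulo `m_R ^ 2 + m_Λ R`. By completeness and Nakayama's lemma `φ` is
surjective (`surjective_of_le_sup`). The projection `R → R ⧸ m_R ^ 2` lifts along
`S ⧸ m_S ^ 2 → R ⧸ m_R ^ 2`, then successively to all `S ⧸ m_S ^ j`, and since `S` is complete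
(`isAdicComplete_powerSeries`) these lifts assemble to `ψ : R → S` with `φ ∘ ψ` congruent to the
identity modulo `m_R ^ 2` (`exists_limit`). Such a `φ ∘ ψ` is surjective, hence injective because
`R` is noetherian, so `ψ` is injective. Minimality of the generators gives
`ker φ ≤ m_S ^ 2 + m_Λ S` (`ker_le`), so each variable `X i` agrees with `ψ (φ (X i))` modulo
`m_S ^ 2 + m_Λ S`; hence `ψ` is surjective, again by `surjective_of_le_sup`, and `R ≅ S`.
-/

open IsLocalRing

universe u

namespace PowerSeriesSmooth

open MvPowerSeries

/-! ### Power series in finitely many variables -/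

/-- The ideal generated by the variables in a power series ring. -/
noncomputable abbrev varsIdeal (n : ℕ) (Λ : Type u) [CommRing Λ] :
    Ideal (MvPowerSeries (Fin n) Λ) :=
  Ideal.span (Set.range X)

section PowerSeries

variable {Λ : Type u} [CommRing Λ] {n : ℕ}

/-- A power series without terms of degree at most `N` is a combination of the variables whose
coefficients have no terms of degree `< N`. -/
lemma exists_eq_sum_X_mul (N : ℕ) (F : MvPowerSeries (Fin n) Λ)
    (hF : ∀ d : Fin n →₀ ℕ, d.degree < N + 1 → coeff d F = 0) :
    ∃ G : Fin n → MvPowerSeries (Fin n) Λ,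
      (∀ i (d : Fin n →₀ ℕ), d.degree < N → coeff d (G i) = 0) ∧ F = ∑ i, X i * G i := by
  classical
  -- `c d` selects a variable dividing the monomial of exponent `d`; the value at `0` is irrelevant.
  have hc : ∀ d : Fin n →₀ ℕ, ∃ o : Option (Fin n), d ≠ 0 → ∃ i, o = some i ∧ 1 ≤ d i := by
    intro d
    by_cases hd : d = 0
    · exact ⟨none, fun h => (h hd).elim⟩
    · obtain ⟨i, hi⟩ := Finsupp.ne_iff.mp hd
      exact ⟨some i, fun _ => ⟨i, rfl, Nat.one_le_iff_ne_zero.mpr hi⟩⟩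
  choose c hc using hc
  let G : Fin n → MvPowerSeries (Fin n) Λ := fun i d =>
    if c (d + Finsupp.single i 1) = some i then coeff (d + Finsupp.single i 1) F else 0
  have hG : ∀ i d, coeff d (G i) =
      if c (d + Finsupp.single i 1) = some i then coeff (d + Finsupp.single i 1) F else 0 :=
    fun i d => rfl
  refine ⟨G, fun i d hd => ?_, ?_⟩
  · rw [hG, hF _ (by simpa using hd), ite_self]
  · ext d
    have key : ∀ i, coeff d (X i * G i) = if 1 ≤ d i ∧ c d = some i then coeff d F else 0 := by
      intro i
      rw [X, coeff_monomial_mul]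
      by_cases h : 1 ≤ d i
      · have h' : Finsupp.single i 1 ≤ d := by simpa using h
        rw [if_pos h', hG, tsub_add_cancel_of_le h']
        simp [h]
      · have h' : ¬ Finsupp.single i 1 ≤ d := by simpa using h
        rw [if_neg h', if_neg (fun hh => h hh.1)]
    rw [map_sum, Finset.sum_congr rfl fun i _ => key i]
    by_cases hd : d = 0
    · rw [hF d (by simp [hd])]; simp
    · obtain ⟨i, hi, hdi⟩ := hc d hd
      rw [Finset.sum_eq_single i]
      · simp [hi, hdi]
      · intro j _ hj
        rw [if_neg]
        rintro ⟨_, h⟩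
        rw [hi] at h
        exact hj (Option.some.inj h).symm
      · simp

/-- A power series without terms of degree `< N` lies in the `N`-th power of the ideal of
variables; this uses that there are only finitely many variables. -/
lemma mem_varsIdeal_pow (N : ℕ) : ∀ F : MvPowerSeries (Fin n) Λ,
    (∀ d : Fin n →₀ ℕ, d.degree < N → coeff d F = 0) → F ∈ varsIdeal n Λ ^ N := by
  induction N with
  | zero => intro F _; simp
  | succ N ih =>
    intro F hF
    obtain ⟨G, hG, rfl⟩ := exists_eq_sum_X_mul N F hF
    rw [pow_succ']
    exact Ideal.sum_mem _ fun i _ =>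
      Ideal.mul_mem_mul (Ideal.subset_span ⟨i, rfl⟩) (ih _ (hG i))

lemma coeff_eq_zero_of_mem_varsIdeal_pow {N : ℕ} {F : MvPowerSeries (Fin n) Λ}
    (hF : F ∈ varsIdeal n Λ ^ N) (d : Fin n →₀ ℕ) (hd : d.degree < N) : coeff d F = 0 := by
  suffices h : (N : ℕ∞) ≤ F.order from
    coeff_of_lt_order (lt_of_lt_of_le (by exact_mod_cast hd) h)
  clear hd d
  induction N generalizing F with
  | zero => simp
  | succ N ih =>
    rw [pow_succ'] at hF
    refine Submodule.mul_induction_on hF (fun a ha b hb => ?_) (fun a b ha hb => ?_)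
    · have h1 : (1 : ℕ∞) ≤ a.order := by
        rw [one_le_order_iff_constCoeff_eq_zero]
        have : varsIdeal n Λ ≤ RingHom.ker (constantCoeff (σ := Fin n) (R := Λ)) := by
          rw [Ideal.span_le]
          rintro _ ⟨i, rfl⟩
          simp
        exact this ha
      calc ((N + 1 : ℕ) : ℕ∞) = 1 + N := by push_cast; ring
        _ ≤ a.order + b.order := add_le_add h1 (ih hb)
        _ ≤ _ := le_order_mul
    · exact (le_min ha hb).trans min_order_le_add

lemma exists_sub_coe_mem (N : ℕ) (F : MvPowerSeries (Fin n) Λ) :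
    ∃ p : MvPolynomial (Fin n) Λ, F - p ∈ varsIdeal n Λ ^ N := by
  refine ⟨F.truncTotal N, mem_varsIdeal_pow N _ fun d hd => ?_⟩
  rw [map_sub, MvPolynomial.coeff_coe, coeff_truncTotal _ hd, sub_self]

lemma X_mem_varsIdeal (i : Fin n) : (X i : MvPowerSeries (Fin n) Λ) ∈ varsIdeal n Λ :=
  Ideal.subset_span ⟨i, rfl⟩

lemma sub_C_mem_varsIdeal (F : MvPowerSeries (Fin n) Λ) :
    F - C (constantCoeff F) ∈ varsIdeal n Λ := by
  rw [← pow_one (varsIdeal n Λ)]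
  refine mem_varsIdeal_pow 1 _ fun d hd => ?_
  have : d = 0 := (Finsupp.degree_eq_zero_iff d).mp (by omega)
  subst this
  simp

lemma coeff_mem_of_mem_map_C {I : Ideal Λ} {F : MvPowerSeries (Fin n) Λ}
    (hF : F ∈ I.map (C (σ := Fin n))) (d : Fin n →₀ ℕ) : coeff d F ∈ I := by
  have h : I.map (C (σ := Fin n)) ≤ RingHom.ker (MvPowerSeries.map (σ := Fin n)
      (Ideal.Quotient.mk I)) := by
    rw [Ideal.map_le_iff_le_comap]
    intro a ha
    simp [RingHom.mem_ker, Ideal.Quotient.eq_zero_iff_mem.mpr ha]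
  have := congrArg (coeff d) (RingHom.mem_ker.mp (h hF))
  rw [coeff_map] at this
  exact Ideal.Quotient.eq_zero_iff_mem.mp (by simpa using this)

/-- Power series over `Λ` may be evaluated at a tuple from an ideal `I` of an `I`-adically
complete `Λ`-algebra. -/
lemma exists_algHom_X {T : Type u} [CommRing T] [Algebra Λ T] (I : Ideal T) [IsAdicComplete I T]
    (x : Fin n → T) (hx : ∀ i, x i ∈ I) :
    ∃ φ : MvPowerSeries (Fin n) Λ →ₐ[Λ] T, ∀ i, φ (X i) = x i := by
  let : WithIdeal T := ⟨I⟩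
  -- The discrete topology on `Λ` makes every structure map out of `Λ` continuous.
  let : UniformSpace Λ := ⊥
  have : DiscreteUniformity Λ := ⟨rfl⟩
  have : IsUniformAddGroup Λ := inferInstance
  have hI : IsAdic I := rfl
  obtain ⟨_, _⟩ := hI.isAdicComplete_iff.mp ‹_›
  have : ContinuousSMul Λ T := by
    refine continuousSMul_of_algebraMap Λ T ?_
    exact continuous_of_discreteTopology
  have ha : HasEval x := by
    refine ⟨fun i => ?_, ?_⟩
    · refine (hI.hasBasis_nhds_zero.tendsto_right_iff).mpr fun k _ => ?_
      filter_upwards [Filter.eventually_ge_atTop k] with m hm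
      exact Ideal.pow_le_pow_right hm (Ideal.pow_mem_pow (hx i) m)
    · simp [Filter.cofinite_eq_bot]
  refine ⟨MvPowerSeries.aeval ha, fun i => ?_⟩
  have := aeval_coe ha (MvPolynomial.X i : MvPolynomial (Fin n) Λ)
  rwa [MvPolynomial.coe_X, MvPolynomial.aeval_X] at this

variable [IsLocalRing Λ]

lemma C_mem_maximalIdeal {a : Λ} (ha : a ∈ maximalIdeal Λ) :
    (C a : MvPowerSeries (Fin n) Λ) ∈ maximalIdeal (MvPowerSeries (Fin n) Λ) := by
  rw [mem_maximalIdeal, mem_nonunits_iff, MvPowerSeries.isUnit_iff_constantCoeff] at *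
  simpa using ha

lemma varsIdeal_le : varsIdeal n Λ ≤ maximalIdeal (MvPowerSeries (Fin n) Λ) := by
  rw [Ideal.span_le]
  rintro _ ⟨i, rfl⟩
  simp [mem_maximalIdeal, MvPowerSeries.isUnit_iff_constantCoeff]

lemma maximalIdeal_eq : maximalIdeal (MvPowerSeries (Fin n) Λ) =
    (maximalIdeal Λ).map (C (σ := Fin n)) ⊔ varsIdeal n Λ := by
  apply le_antisymm
  · intro F hF
    rw [← add_sub_cancel (C (constantCoeff F)) F]
    refine Submodule.add_mem_sup (Ideal.mem_map_of_mem _ ?_) (sub_C_mem_varsIdeal F)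
    rwa [mem_maximalIdeal, mem_nonunits_iff, ← MvPowerSeries.isUnit_iff_constantCoeff]
  · refine sup_le (Ideal.map_le_iff_le_comap.mpr fun a ha => ?_) varsIdeal_le
    exact C_mem_maximalIdeal ha

/-- The exponent `N + N` is what makes each product of `N + N` generators of `m_S` contain either
`N` variables or `N` scalars from `m_Λ`. -/
lemma coeff_mem_of_mem_maximalIdeal_pow {N : ℕ} {F : MvPowerSeries (Fin n) Λ}
    (hF : F ∈ maximalIdeal (MvPowerSeries (Fin n) Λ) ^ (N + N)) (d : Fin n →₀ ℕ)
    (hd : d.degree < N) : coeff d F ∈ maximalIdeal Λ ^ N := by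
  rw [maximalIdeal_eq] at hF
  obtain ⟨a, ha, b, hb, rfl⟩ := Submodule.mem_sup.mp (Ideal.sup_pow_add_le_pow_sup_pow hF)
  rw [← Ideal.map_pow] at ha
  rw [map_add, coeff_eq_zero_of_mem_varsIdeal_pow hb d hd, add_zero]
  exact coeff_mem_of_mem_map_C ha d

lemma mem_maximalIdeal_pow {N : ℕ} {F : MvPowerSeries (Fin n) Λ}
    (hF : ∀ d : Fin n →₀ ℕ, d.degree < N → coeff d F ∈ maximalIdeal Λ ^ N) :
    F ∈ maximalIdeal (MvPowerSeries (Fin n) Λ) ^ N := by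
  have h1 : F - F.truncTotal N ∈ maximalIdeal (MvPowerSeries (Fin n) Λ) ^ N := by
    refine Ideal.pow_right_mono varsIdeal_le N (mem_varsIdeal_pow N _ fun d hd => ?_)
    rw [map_sub, MvPolynomial.coeff_coe, coeff_truncTotal _ hd, sub_self]
  have h2 : (F.truncTotal N : MvPowerSeries (Fin n) Λ) ∈
      maximalIdeal (MvPowerSeries (Fin n) Λ) ^ N := by
    have h3 : F.truncTotal N ∈ (maximalIdeal Λ ^ N).map (MvPolynomial.C (σ := Fin n)) := by
      rw [MvPolynomial.mem_map_C_iff]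
      intro d
      by_cases hd : d.degree < N
      · rw [coeff_truncTotal _ hd]; exact hF d hd
      · rw [coeff_truncTotal_eq_zero _ (not_lt.mp hd)]; exact zero_mem _
    have h4 := Ideal.mem_map_of_mem (MvPolynomial.coeToMvPowerSeries.ringHom (σ := Fin n)) h3
    rw [Ideal.map_map, Ideal.map_pow] at h4
    refine Ideal.pow_right_mono (Ideal.map_le_iff_le_comap.mpr fun a ha => ?_) N h4
    simpa using C_mem_maximalIdeal ha
  simpa using add_mem h1 h2

/-- Limits are taken coefficientwise. -/
instance isPrecomplete_powerSeries [IsAdicComplete (maximalIdeal Λ) Λ] :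
    IsPrecomplete (maximalIdeal (MvPowerSeries (Fin n) Λ)) (MvPowerSeries (Fin n) Λ) := by
  refine ⟨fun f hf => ?_⟩
  simp only [smul_eq_mul, Ideal.mul_top, SModEq.sub_mem] at hf ⊢
  -- For each exponent `d`, the coefficients of `f (N + N)` at `d` form a Cauchy sequence once
  -- `N` exceeds the degree of `d`; shifting by the degree makes this uniform.
  have hlim : ∀ d : Fin n →₀ ℕ, ∃ L : Λ, ∀ N, d.degree < N →
      coeff d (f (N + N)) - L ∈ maximalIdeal Λ ^ N := by
    intro d
    let s : ℕ → Λ := fun N => coeff d (f ((N + d.degree + 1) + (N + d.degree + 1)))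
    have hs : ∀ {a b : ℕ}, a ≤ b → s a - s b ∈ maximalIdeal Λ ^ (a + d.degree + 1) := by
      intro a b hab
      rw [← map_sub]
      exact coeff_mem_of_mem_maximalIdeal_pow (hf (by omega)) d (by omega)
    obtain ⟨L, hL⟩ := IsPrecomplete.prec (I := maximalIdeal Λ) inferInstance (f := s)
      (fun {a b} hab => by
        rw [SModEq.sub_mem, smul_eq_mul, Ideal.mul_top]
        exact Ideal.pow_le_pow_right (by omega) (hs hab))
    simp only [smul_eq_mul, Ideal.mul_top, SModEq.sub_mem] at hL
    refine ⟨L, fun N hN => ?_⟩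
    obtain ⟨a, rfl⟩ : ∃ a, N = a + d.degree + 1 := ⟨N - d.degree - 1, by omega⟩
    have h1 := hs (show a ≤ a + d.degree + 1 by omega)
    have h2 := hL (a + d.degree + 1)
    simpa [s] using add_mem h1 h2
  choose L hL using hlim
  let G : MvPowerSeries (Fin n) Λ := L
  refine ⟨G, fun N => ?_⟩
  have h1 := hf (show N ≤ N + N by omega)
  have h2 : f (N + N) - G ∈
      maximalIdeal (MvPowerSeries (Fin n) Λ) ^ N := mem_maximalIdeal_pow fun d hd => by
    rw [map_sub]
    exact hL d N hd
  simpa using add_mem h1 h2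

instance isAdicComplete_powerSeries [IsNoetherianRing Λ] [IsAdicComplete (maximalIdeal Λ) Λ] :
    IsAdicComplete (maximalIdeal (MvPowerSeries (Fin n) Λ)) (MvPowerSeries (Fin n) Λ) where

end PowerSeries

/-! ### Local algebras with trivial residue field extension -/

section LocalAlgebra

variable (Λ : Type u) [CommRing Λ] [IsLocalRing Λ]

/-- Every element of the local `Λ`-algebra `T` is congruent to a scalar modulo the maximal ideal,
that is, `Λ` surjects onto the residue field of `T`. -/
def ResidueSurj (T : Type u) [CommRing T] [IsLocalRing T] [Algebra Λ T] : Prop :=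
  ∀ t : T, ∃ a : Λ, t - algebraMap Λ T a ∈ maximalIdeal T

variable {Λ}
variable {T T' : Type u} [CommRing T] [IsLocalRing T] [Algebra Λ T]
  [CommRing T'] [IsLocalRing T'] [Algebra Λ T']

lemma residueSurj_iff [IsLocalHom (algebraMap Λ T)] :
    ResidueSurj Λ T ↔ Function.Bijective (ResidueField.map (algebraMap Λ T)) := by
  constructor
  · refine fun h => ⟨RingHom.injective _, fun y => ?_⟩
    obtain ⟨t, rfl⟩ := residue_surjective y
    obtain ⟨a, ha⟩ := h t
    refine ⟨residue Λ a, ?_⟩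
    rw [ResidueField.map_residue, eq_comm, ← sub_eq_zero, ← map_sub, residue_eq_zero_iff]
    exact ha
  · intro h t
    obtain ⟨y, hy⟩ := h.2 (residue T t)
    obtain ⟨a, rfl⟩ := residue_surjective y
    refine ⟨a, ?_⟩
    rw [ResidueField.map_residue, eq_comm, ← sub_eq_zero, ← map_sub, residue_eq_zero_iff] at hy
    exact hy

lemma algebraMap_mem_maximalIdeal [IsLocalHom (algebraMap Λ T)] {a : Λ}
    (ha : a ∈ maximalIdeal Λ) : algebraMap Λ T a ∈ maximalIdeal T := by
  rw [mem_maximalIdeal, mem_nonunits_iff] at *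
  exact fun h => ha (isUnit_of_map_unit _ _ h)

lemma residueSurj_powerSeries (n : ℕ) : ResidueSurj Λ (MvPowerSeries (Fin n) Λ) :=
  fun F => ⟨constantCoeff F, varsIdeal_le (sub_C_mem_varsIdeal F)⟩

instance isLocalHom_powerSeries (n : ℕ) :
    IsLocalHom (algebraMap Λ (MvPowerSeries (Fin n) Λ)) :=
  ⟨fun a ha => by
    simpa [MvPowerSeries.algebraMap_apply] using MvPowerSeries.isUnit_iff_constantCoeff.mp ha⟩

/-- A `Λ`-algebra homomorphism between local `Λ`-algebras is local as soon as `Λ` surjects onto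
the residue field of its target. -/
lemma map_mem_maximalIdeal [IsLocalHom (algebraMap Λ T')] (hT : ResidueSurj Λ T') (h : T →ₐ[Λ] T')
    {t : T} (ht : t ∈ maximalIdeal T) : h t ∈ maximalIdeal T' := by
  obtain ⟨a, ha⟩ := hT (h t)
  by_cases hu : IsUnit a
  · -- The unit `t - a` cannot map to the nonunit `h t - a`.
    exfalso
    have h1 : IsUnit (t - algebraMap Λ T a) := by
      by_contra hn
      have h2 := sub_mem ht ((mem_maximalIdeal _).mpr hn)
      rw [sub_sub_cancel] at h2
      exact h2 (hu.map _)
    have h3 := h1.map h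
    rw [map_sub, AlgHom.commutes] at h3
    exact ha h3
  · have := add_mem ha (algebraMap_mem_maximalIdeal (T := T') ((mem_maximalIdeal a).mpr hu))
    rwa [sub_add_cancel] at this

/-- Completeness and Nakayama's lemma reduce the surjectivity of a homomorphism of local
`Λ`-algebras to the generation of the maximal ideal modulo its square. -/
lemma surjective_of_le_sup [IsLocalHom (algebraMap Λ T')] [IsNoetherianRing T']
    [IsPrecomplete (maximalIdeal T) T] (hT : ResidueSurj Λ T') (h : T →ₐ[Λ] T')
    (hle : maximalIdeal T' ≤ (maximalIdeal T).map h ⊔ maximalIdeal T' ^ 2) :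
    Function.Surjective h := by
  have h1 : (maximalIdeal T).map h.toRingHom = maximalIdeal T' := by
    apply le_antisymm
    · exact Ideal.map_le_iff_le_comap.mpr fun t ht => map_mem_maximalIdeal hT h ht
    · refine Submodule.le_of_le_smul_of_le_jacobson_bot (I := maximalIdeal T')
        (IsNoetherian.noetherian _) (maximalIdeal_le_jacobson _) ?_
      rwa [smul_eq_mul, ← pow_two]
  have : IsHausdorff ((maximalIdeal T).map h.toRingHom) T' := by
    rw [h1]; infer_instance
  refine surjective_of_mk_map_comp_surjective (I := maximalIdeal T) h.toRingHom fun y => ?_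
  obtain ⟨t, rfl⟩ := Ideal.Quotient.mk_surjective y
  obtain ⟨a, ha⟩ := hT t
  refine ⟨algebraMap Λ T a, ?_⟩
  rw [RingHom.comp_apply, eq_comm, Ideal.Quotient.eq, h1]
  simpa using ha

/-- The quotients `T ⧸ m_T ^ N` with `N ≠ 0` are objects of `(Art_Λ)`. -/
lemma artinian_quotient [IsNoetherianRing T] [IsLocalHom (algebraMap Λ T)] (hT : ResidueSurj Λ T)
    {N : ℕ} (hN : N ≠ 0) :
    ∃ _ : IsLocalRing (T ⧸ maximalIdeal T ^ N), IsArtinianRing (T ⧸ maximalIdeal T ^ N) ∧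
      ∃ _ : IsLocalHom (algebraMap Λ (T ⧸ maximalIdeal T ^ N)),
        Function.Bijective (ResidueField.map (algebraMap Λ (T ⧸ maximalIdeal T ^ N))) := by
  have hlt : maximalIdeal T ^ N ≤ maximalIdeal T := Ideal.pow_le_self hN
  have : Nontrivial (T ⧸ maximalIdeal T ^ N) := Ideal.Quotient.nontrivial_iff.mpr fun h =>
    (maximalIdeal.isMaximal T).ne_top (top_le_iff.mp (h ▸ hlt))
  have hloc : IsLocalRing (T ⧸ maximalIdeal T ^ N) :=
    .of_surjective' (Ideal.Quotient.mk _) Ideal.Quotient.mk_surjective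
  have hmk : ∀ t ∈ maximalIdeal T,
      Ideal.Quotient.mk (maximalIdeal T ^ N) t ∈ maximalIdeal (T ⧸ maximalIdeal T ^ N) := by
    intro t ht
    rw [mem_maximalIdeal, mem_nonunits_iff]
    intro hu
    have hlh : IsLocalHom (Ideal.Quotient.mk (maximalIdeal T ^ N)) :=
      .of_surjective _ Ideal.Quotient.mk_surjective
    exact ht (isUnit_of_map_unit _ _ hu)
  have hmax : maximalIdeal (T ⧸ maximalIdeal T ^ N) ≤
      (maximalIdeal T).map (Ideal.Quotient.mk (maximalIdeal T ^ N)) := by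
    intro y hy
    obtain ⟨t, rfl⟩ := Ideal.Quotient.mk_surjective y
    exact Ideal.mem_map_of_mem _ ((mem_maximalIdeal t).mpr fun hu => hy (hu.map _))
  have hart : IsArtinianRing (T ⧸ maximalIdeal T ^ N) := by
    rw [isArtinianRing_iff_isNilpotent_maximalIdeal]
    refine ⟨N, ?_⟩
    rw [Ideal.zero_eq_bot, eq_bot_iff]
    refine (Ideal.pow_right_mono hmax N).trans ?_
    rw [← Ideal.map_pow, Ideal.map_quotient_self]
  have hlocal : IsLocalHom (algebraMap Λ (T ⧸ maximalIdeal T ^ N)) := by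
    refine ⟨fun a ha => ?_⟩
    by_contra hn
    exact hmk _ (algebraMap_mem_maximalIdeal (T := T) ((mem_maximalIdeal a).mpr hn)) ha
  refine ⟨hloc, hart, hlocal, residueSurj_iff.mp fun y => ?_⟩
  obtain ⟨t, rfl⟩ := Ideal.Quotient.mk_surjective y
  obtain ⟨a, ha⟩ := hT t
  exact ⟨a, by simpa using hmk _ ha⟩

end LocalAlgebra

/-- Successive lifting along `S ⧸ I ^ (n + 3) → S ⧸ I ^ (n + 2)` produces a homomorphism to the
complete ring `S`. -/
lemma exists_limit {Λ R S : Type u} [CommRing Λ] [CommRing R] [CommRing S] [Algebra Λ R]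
    [Algebra Λ S]
    (I : Ideal S) [IsAdicComplete I S] (g₀ : R →ₐ[Λ] S ⧸ I ^ 2)
    (hstep : ∀ (n : ℕ) (g : R →ₐ[Λ] S ⧸ I ^ (n + 2)), ∃ g' : R →ₐ[Λ] S ⧸ I ^ (n + 1 + 2),
      (Ideal.Quotient.factorₐ Λ (Ideal.pow_le_pow_right (by omega))).comp g' = g) :
    ∃ ψ : R →ₐ[Λ] S, (Ideal.Quotient.mkₐ Λ (I ^ 2)).comp ψ = g₀ := by
  choose next hnext using hstep
  let f : (n : ℕ) → R →ₐ[Λ] S ⧸ I ^ (n + 2) := fun n => Nat.rec g₀ next n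
  have ha : StrictMono (fun n : ℕ => n + 2) := fun a b h => by simpa using h
  have hf : ∀ {m : ℕ}, (Ideal.Quotient.factorPow I (ha.monotone m.le_succ)).comp
      (f (m + 1)).toRingHom = (f m).toRingHom := by
    intro m
    ext x
    exact DFunLike.congr_fun (hnext m (f m)) x
  let ψ := IsAdicComplete.StrictMono.liftRingHom I ha (fun n => (f n).toRingHom) hf
  have hψ : ∀ n x, Ideal.Quotient.mk (I ^ (n + 2)) (ψ x) = f n x := fun n x =>
    IsAdicComplete.StrictMono.mk_liftRingHom I ha (fun n => (f n).toRingHom) hf x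
  refine ⟨{ ψ with commutes' := fun a => ?_ }, ?_⟩
  · refine sub_eq_zero.mp (IsHausdorff.haus (I := I) inferInstance _ fun n => ?_)
    rw [SModEq.zero, smul_eq_mul, Ideal.mul_top]
    refine Ideal.pow_le_pow_right (show n ≤ n + 2 by omega) (Ideal.Quotient.eq.mp ?_)
    exact (hψ n _).trans ((f n).commutes a)
  · ext x
    exact hψ 0 x

/-- A minimal system of generators of `m_R` modulo an ideal `I₀`; by minimality, any relation
between them modulo `I₀` has its coefficients in `m_R`. -/
lemma exists_minimal_generators (R : Type u) [CommRing R] [IsLocalRing R] [IsNoetherianRing R]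
    (I₀ : Ideal R) :
    ∃ (n : ℕ) (x : Fin n → R), (∀ i, x i ∈ maximalIdeal R) ∧
      maximalIdeal R ≤ Ideal.span (Set.range x) ⊔ I₀ ∧
      ∀ r : Fin n → R, ∑ i, r i * x i ∈ I₀ → ∀ i, r i ∈ maximalIdeal R := by
  classical
  have hex : ∃ (n : ℕ) (x : Fin n → R), (∀ i, x i ∈ maximalIdeal R) ∧
      maximalIdeal R ≤ Ideal.span (Set.range x) ⊔ I₀ := by
    obtain ⟨n, x, hx⟩ := Submodule.fg_iff_exists_fin_generating_family.mp
      (IsNoetherian.noetherian (maximalIdeal R))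
    exact ⟨n, x, fun i => hx ▸ Submodule.subset_span ⟨i, rfl⟩, hx.ge.trans le_sup_left⟩
  obtain ⟨x, hx, hgen⟩ := Nat.find_spec hex
  refine ⟨Nat.find hex, x, hx, hgen, fun r hr i => ?_⟩
  have hmin := fun m (hm : m < Nat.find hex) => Nat.find_min hex hm
  revert x r i hmin
  generalize Nat.find hex = n
  intro x hx hgen r hr i hmin
  by_contra hu
  obtain ⟨m, rfl⟩ : ∃ m, n = m + 1 := ⟨n - 1, by have := i.pos; omega⟩
  obtain ⟨u, hu⟩ : IsUnit (r i) := by simpa [mem_maximalIdeal] using hu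
  -- If `r i` is a unit, then `x i` is redundant, against the minimality of the number of generators.
  refine hmin m (by omega) ⟨x ∘ i.succAbove, fun j => hx _, hgen.trans (sup_le ?_ le_sup_right)⟩
  have hother : ∀ j, x (i.succAbove j) ∈ Ideal.span (Set.range (x ∘ i.succAbove)) ⊔ I₀ :=
    fun j => Ideal.mem_sup_left (Ideal.subset_span ⟨j, rfl⟩)
  rw [Ideal.span_le]
  rintro _ ⟨j, rfl⟩
  rcases Fin.eq_self_or_eq_succAbove i j with rfl | ⟨j, rfl⟩
  · rw [Fin.sum_univ_succAbove _ j] at hr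
    have h1 : r j * x j ∈ Ideal.span (Set.range (x ∘ j.succAbove)) ⊔ I₀ := by
      have := sub_mem (Ideal.mem_sup_right (S := Ideal.span (Set.range (x ∘ j.succAbove))) hr)
        (Ideal.sum_mem _ fun k (_ : k ∈ Finset.univ) =>
          Ideal.mul_mem_left _ (r (j.succAbove k)) (hother k))
      simpa using this
    rw [← hu] at h1
    exact (Ideal.unit_mul_mem_iff_mem _ u.isUnit).mp h1
  · exact hother j

/-! ### Lifting for power series and the kernel of a minimal presentation -/

section Main

variable {Λ : Type u} [CommRing Λ] [IsLocalRing Λ]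

/-- The power series ring has the lifting property: lift the images of the variables, and
evaluate. Polynomials are dense enough, because the ideal of variables acts nilpotently on an
Artinian target. -/
lemma powerSeries_lift {n : ℕ} {A A' : Type u} [CommRing A] [CommRing A'] [IsArtinianRing A]
    [IsArtinianRing A'] [IsLocalRing A] [IsLocalRing A'] [Algebra Λ A] [Algebra Λ A']
    [IsLocalHom (algebraMap Λ A)] (hA : ResidueSurj Λ A)
    (π : A' →ₐ[Λ] A) (hπ : Function.Surjective π) (f : MvPowerSeries (Fin n) Λ →ₐ[Λ] A) :
    ∃ g : MvPowerSeries (Fin n) Λ →ₐ[Λ] A', π.comp g = f := by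
  have hfX : ∀ i, f (X i) ∈ maximalIdeal A := fun i =>
    map_mem_maximalIdeal hA f (varsIdeal_le (X_mem_varsIdeal i))
  choose y hy using fun i => hπ (f (X i))
  have hym : ∀ i, y i ∈ maximalIdeal A' := fun i => (mem_maximalIdeal _).mpr fun hu => by
    have := hu.map π
    rw [hy] at this
    exact hfX i this
  obtain ⟨g, hg⟩ := exists_algHom_X (Λ := Λ) (maximalIdeal A') y hym
  refine ⟨g, ?_⟩
  obtain ⟨N, hN⟩ := (isArtinianRing_iff_isNilpotent_maximalIdeal A).mp inferInstance
  have hkill : ∀ h : MvPowerSeries (Fin n) Λ →ₐ[Λ] A, ∀ F ∈ varsIdeal n Λ ^ N, h F = 0 := by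
    intro h F hF
    have h1 : varsIdeal n Λ ≤ (maximalIdeal A).comap h :=
      fun G hG => map_mem_maximalIdeal hA h (varsIdeal_le hG)
    have h2 := Ideal.le_comap_pow h N (Ideal.pow_right_mono h1 N hF)
    rw [hN] at h2
    simpa using h2
  have hpoly : (π.comp g).comp (MvPolynomial.coeToMvPowerSeries.algHom Λ) =
      f.comp (MvPolynomial.coeToMvPowerSeries.algHom Λ) := by
    ext i
    simp [hg, hy]
  ext F
  obtain ⟨p, hp⟩ := exists_sub_coe_mem N F
  have h1 := hkill (π.comp g) _ hp
  have h2 := hkill f _ hp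
  have h3 := DFunLike.congr_fun hpoly p
  simp only [AlgHom.comp_apply, MvPolynomial.coeToMvPowerSeries.algHom_apply,
    Algebra.algebraMap_self] at h3
  rw [map_sub, sub_eq_zero] at h1 h2
  rw [h1, h2]
  exact h3

/-- If `φ` sends the variables to a system that is minimal modulo `m_R ^ 2 + m_Λ R`, then a power
series killed by `φ` has no linear part modulo `m_Λ`. -/
lemma ker_le {n : ℕ} {R : Type u} [CommRing R] [IsLocalRing R] [Algebra Λ R] {x : Fin n → R}
    (hmin : ∀ r : Fin n → R,
      ∑ i, r i * x i ∈ maximalIdeal R ^ 2 ⊔ (maximalIdeal Λ).map (algebraMap Λ R) →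
      ∀ i, r i ∈ maximalIdeal R)
    (φ : MvPowerSeries (Fin n) Λ →ₐ[Λ] R) (hφ : ∀ i, φ (X i) = x i)
    (F : MvPowerSeries (Fin n) Λ) (hF : φ F = 0) :
    F ∈ maximalIdeal (MvPowerSeries (Fin n) Λ) ^ 2 ⊔ (maximalIdeal Λ).map (C (σ := Fin n)) := by
  have hFm : F ∈ maximalIdeal (MvPowerSeries (Fin n) Λ) := (mem_maximalIdeal _).mpr fun hu => by
    have := hu.map φ
    rw [hF] at this
    exact not_isUnit_zero this
  rw [maximalIdeal_eq] at hFm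
  obtain ⟨a, ha, b, hb, rfl⟩ := Submodule.mem_sup.mp hFm
  obtain ⟨c, rfl⟩ := (Ideal.mem_span_range_iff_exists_fun).mp hb
  have hφa : φ a ∈ (maximalIdeal Λ).map (algebraMap Λ R) := by
    have h1 := Ideal.mem_map_of_mem φ.toRingHom ha
    rw [Ideal.map_map] at h1
    have h2 : φ.toRingHom.comp (C (σ := Fin n)) = algebraMap Λ R := by
      ext z; exact φ.commutes z
    rwa [h2] at h1
  have hsum : ∑ i, φ (c i) * x i ∈
      maximalIdeal R ^ 2 ⊔ (maximalIdeal Λ).map (algebraMap Λ R) := by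
    have h1 : ∑ i, φ (c i) * x i = - φ a := by
      rw [map_add, map_sum] at hF
      simp only [map_mul, hφ] at hF
      exact eq_neg_of_add_eq_zero_right hF
    rw [h1]
    exact neg_mem (Ideal.mem_sup_right hφa)
  have hc : ∀ i, c i ∈ maximalIdeal (MvPowerSeries (Fin n) Λ) := fun i =>
    (mem_maximalIdeal _).mpr fun hu => hmin _ hsum i (hu.map φ)
  refine add_mem (Ideal.mem_sup_right ha) (Ideal.mem_sup_left (Ideal.sum_mem _ fun i _ => ?_))
  rw [pow_two]
  exact Ideal.mul_mem_mul (hc i) (varsIdeal_le (X_mem_varsIdeal i))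

/-- The kernels of the iterates of `f` stabilize. -/
lemma injective_of_surjective_endomorphism {R : Type u} [CommRing R] [IsNoetherianRing R]
    (f : R →+* R) (hf : Function.Surjective f) : Function.Injective f := by
  have hmono : Monotone fun n : ℕ => RingHom.ker (f ^ n) := monotone_nat_of_le_succ fun n x hx => by
    rw [RingHom.mem_ker] at *
    rw [pow_succ', RingHom.mul_def, RingHom.comp_apply, hx, map_zero]
  obtain ⟨n, hn⟩ := monotone_stabilizes_iff_noetherian.mpr ‹IsNoetherianRing R› ⟨_, hmono⟩
  refine (injective_iff_map_eq_zero f).mpr fun x hx => ?_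
  obtain ⟨y, rfl⟩ : ∃ y, (f ^ n) y = x := by
    rw [RingHom.coe_pow]
    exact hf.iterate n x
  have h1 : y ∈ RingHom.ker (f ^ (n + 1)) := by
    rw [RingHom.mem_ker, pow_succ']
    exact hx
  have h2 : RingHom.ker (f ^ n) = RingHom.ker (f ^ (n + 1)) := hn (n + 1) n.le_succ
  rw [← h2] at h1
  exact h1

end Main

end PowerSeriesSmooth

open PowerSeriesSmooth

/-- **Statement 12.** Let `Λ` be a noetherian complete local ring with residue field `k` and
let `R` be an object of `(Comp_Λ)`.  Then `R` is isomorphic, as a `Λ`-algebra, to a power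
series ring `Λ⟦x₁, …, xₙ⟧` for some `n` if and only if every `Λ`-algebra homomorphism from
`R` to an object `A` of `(Art_Λ)` lifts along every surjection `A' → A` in `(Art_Λ)`. -/
theorem power_series_iff_formally_smooth
    (Λ : Type u) [CommRing Λ] [IsNoetherianRing Λ] [IsLocalRing Λ]
    [IsAdicComplete (maximalIdeal Λ) Λ]
    (R : Type u) [CommRing R] [IsNoetherianRing R] [IsLocalRing R]
    [Algebra Λ R] [IsLocalHom (algebraMap Λ R)]
    [IsAdicComplete (maximalIdeal R) R]
    (hres : Function.Bijective (ResidueField.map (algebraMap Λ R))) :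
    (∃ n : ℕ, Nonempty (R ≃ₐ[Λ] MvPowerSeries (Fin n) Λ)) ↔
      (∀ (A A' : Type u) [CommRing A] [CommRing A'] [IsArtinianRing A] [IsArtinianRing A']
        [IsLocalRing A] [IsLocalRing A'] [Algebra Λ A] [Algebra Λ A']
        [IsLocalHom (algebraMap Λ A)] [IsLocalHom (algebraMap Λ A')],
        Function.Bijective (ResidueField.map (algebraMap Λ A)) →
        Function.Bijective (ResidueField.map (algebraMap Λ A')) →
        ∀ π : A' →ₐ[Λ] A, Function.Surjective π →
        ∀ f : R →ₐ[Λ] A, ∃ g : R →ₐ[Λ] A', π.comp g = f) := by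
  have hR : ResidueSurj Λ R := residueSurj_iff.mpr hres
  constructor
  · rintro ⟨n, ⟨e⟩⟩ A A' _ _ _ _ _ _ _ _ _ _ hA hA' π hπ f
    obtain ⟨g, hg⟩ := powerSeries_lift (residueSurj_iff.mpr hA) π hπ (f.comp e.symm.toAlgHom)
    refine ⟨g.comp e.toAlgHom, ?_⟩
    rw [← AlgHom.comp_assoc, hg]
    ext r
    simp
  · intro H
    obtain ⟨n, x, hx, hgen, hmin⟩ := exists_minimal_generators R
      (maximalIdeal R ^ 2 ⊔ (maximalIdeal Λ).map (algebraMap Λ R))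
    obtain ⟨φ, hφ⟩ := exists_algHom_X (Λ := Λ) (maximalIdeal R) x hx
    have hS : ResidueSurj Λ (MvPowerSeries (Fin n) Λ) := residueSurj_powerSeries n
    set mS := maximalIdeal (MvPowerSeries (Fin n) Λ) with hmS
    have hφm : mS ≤ (maximalIdeal R).comap φ := fun F hF => map_mem_maximalIdeal hR φ hF
    have hφsurj : Function.Surjective φ := by
      refine surjective_of_le_sup hR φ (hgen.trans (sup_le ?_ (sup_le le_sup_right ?_)))
      · refine le_trans (Ideal.span_le.mpr ?_) le_sup_left
        rintro _ ⟨i, rfl⟩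
        rw [← hφ]
        exact Ideal.mem_map_of_mem φ (varsIdeal_le (X_mem_varsIdeal i))
      · refine le_trans (Ideal.map_le_iff_le_comap.mpr fun a ha => ?_) le_sup_left
        rw [Ideal.mem_comap, ← φ.commutes]
        exact Ideal.mem_map_of_mem φ (algebraMap_mem_maximalIdeal ha)
    -- The first lifting problem: `R → R ⧸ m_R ^ 2` along `S ⧸ m_S ^ 2 → R ⧸ m_R ^ 2`.
    obtain ⟨ψ, hψ⟩ : ∃ ψ : R →ₐ[Λ] MvPowerSeries (Fin n) Λ,
        ∀ r, φ (ψ r) - r ∈ maximalIdeal R ^ 2 := by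
      have hle : mS ^ 2 ≤ (maximalIdeal R ^ 2).comap φ :=
        (Ideal.pow_right_mono hφm 2).trans (Ideal.le_comap_pow φ 2)
      let π : (MvPowerSeries (Fin n) Λ ⧸ mS ^ 2) →ₐ[Λ] R ⧸ maximalIdeal R ^ 2 :=
        Ideal.quotientMapₐ _ φ hle
      have hπ : Function.Surjective π := Ideal.quotientMap_surjective (H := hle) hφsurj
      obtain ⟨_, _, _, hA⟩ := artinian_quotient hR two_ne_zero
      obtain ⟨_, _, _, hA'⟩ := artinian_quotient hS two_ne_zero
      obtain ⟨g₀, hg₀⟩ := H _ _ hA hA' π hπ (Ideal.Quotient.mkₐ Λ _)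
      obtain ⟨ψ, hψ⟩ := exists_limit mS g₀ fun m g => by
        obtain ⟨_, _, _, hB⟩ := artinian_quotient hS (N := m + 2) (by omega)
        obtain ⟨_, _, _, hB'⟩ := artinian_quotient hS (N := m + 1 + 2) (by omega)
        exact H _ _ hB hB' (Ideal.Quotient.factorₐ Λ (Ideal.pow_le_pow_right (by omega)))
          (Ideal.Quotient.factor_surjective (Ideal.pow_le_pow_right (by omega))) g
      refine ⟨ψ, fun r => Ideal.Quotient.eq.mp ?_⟩
      have h1 := DFunLike.congr_fun hg₀ r
      rw [← hψ] at h1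
      exact h1
    have hinj : Function.Injective ψ := by
      have h1 : Function.Surjective (φ.comp ψ) := by
        refine surjective_of_le_sup hR (φ.comp ψ) fun r hr => ?_
        rw [← sub_sub_cancel (φ (ψ r)) r]
        exact sub_mem (Ideal.mem_sup_left (Ideal.mem_map_of_mem (φ.comp ψ) hr))
          (Ideal.mem_sup_right (hψ r))
      have h2 : Function.Injective (φ.comp ψ) :=
        injective_of_surjective_endomorphism (φ.comp ψ).toRingHom h1
      exact Function.Injective.of_comp (f := φ) h2
    have hsurj : Function.Surjective ψ := by
      refine surjective_of_le_sup hS ψ ?_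
      have hC : (maximalIdeal Λ).map (MvPowerSeries.C (σ := Fin n)) ≤
          (maximalIdeal R).map ψ ⊔ mS ^ 2 := by
        refine le_trans (Ideal.map_le_iff_le_comap.mpr fun a ha => ?_) le_sup_left
        have h1 := Ideal.mem_map_of_mem ψ (algebraMap_mem_maximalIdeal (T := R) ha)
        rwa [ψ.commutes] at h1
      nth_rw 1 [maximalIdeal_eq]
      refine sup_le hC (Ideal.span_le.mpr ?_)
      rintro _ ⟨i, rfl⟩
      -- Up to a correction `t ∈ m_S ^ 2`, the difference of `X i` and `ψ (x i)` is killed by `φ`.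
      have h1 : φ (MvPowerSeries.X i - ψ (x i)) ∈ (mS ^ 2).map φ := by
        have hle : maximalIdeal R ≤ mS.map φ := fun r hr => by
          obtain ⟨s, rfl⟩ := hφsurj r
          exact Ideal.mem_map_of_mem φ ((mem_maximalIdeal s).mpr fun hu => hr (hu.map φ))
        rw [map_sub, hφ, ← neg_sub, Ideal.map_pow]
        exact neg_mem (Ideal.pow_right_mono hle 2 (hψ (x i)))
      obtain ⟨t, ht, hte⟩ := (Ideal.mem_map_iff_of_surjective φ hφsurj).mp h1
      have h2 := ker_le hmin φ hφ (MvPowerSeries.X i - ψ (x i) - t)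
        (by rw [map_sub, hte, sub_self])
      have h3 : (MvPowerSeries.X i : MvPowerSeries (Fin n) Λ) =
        (MvPowerSeries.X i - ψ (x i) - t) + t + ψ (x i) := by ring
      rw [SetLike.mem_coe, h3]
      exact add_mem (add_mem (sup_le le_sup_right hC h2) (Ideal.mem_sup_right ht))
        (Ideal.mem_sup_left (Ideal.mem_map_of_mem ψ (hx i)))
    exact ⟨n, ⟨AlgEquiv.ofBijective ψ ⟨hinj, hsurj⟩⟩⟩
end

section
/- Let k be a field, V a finite-dimensional k-vector space, A₀ a commutative k-algebra, and I₀ an ideal of A₀. Let A_V := A₀ ⊗_k (k ⊕ V), an algebra over the trivial square-zero extension k ⊕ V, and let π : A_V → A₀ be the surjection induced by the projection k ⊕ V → k. Then the set of ideals J of A_V such that the quotient A_V/J is flat as a (k ⊕ V)-module and the image π(J) equals I₀ is in bijection with the set of A₀-module homomorphisms I₀ → V ⊗_k (A₀/I₀). (This computes the first-order embedded deformations of the closed subscheme defined by I₀: the tangent space of the Hilbert deformation problem is Hom_{A₀}(I₀, A₀/I₀) when V = k.) -/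
/-!
Write `T = k ⊕ V`. Every element of `A₀ ⊗ T` is uniquely `x + w` with `x ∈ A₀` and `w ∈ A₀ ⊗ V`
(`decomp`), and the `V`-component obeys the Leibniz rule (`projV_mul`). To an `A₀`-linear map `φ`
from `I₀` to `(A₀/I₀) ⊗ V` one attaches the ideal of all `x + w` with `x ∈ I₀` and `φ x = w mod I₀`
(`defIdeal`); conversely `φ x` is read off from any lift `x + w ∈ J` of `x`.

That this works for `J` mapping onto `I₀` amounts to `J ∩ (A₀ ⊗ V) = I₀ ⊗ V`, in which `⊇` always
holds (`inclV_mem`) and `⊆` is equivalent to flatness of the quotient over `T`. Flatness implies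
`⊆` by the equational criterion applied to relations with coefficients in a basis of `V`
(`quotV_eq_zero_of_flat`). Conversely, under `⊆` a `k`-linear section of `A₀ → A₀/I₀` identifies the
quotient with the free `T`-module `(A₀/I₀) ⊗ T` (`flat_of_forall`).
-/

/-- For a commutative ring `k`, every `k`-module is canonically a `kᵐᵒᵖ`-module, with central
scalars; this gives meaning to the trivial square-zero extension `k ⊕ V` below. -/
instance (priority := 100) opModule {k : Type*} [CommSemiring k] {V : Type*}
    [AddCommMonoid V] [Module k V] : Module kᵐᵒᵖ V :=
  Module.compHom V ((RingHom.id k).fromOpposite mul_comm)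

instance (priority := 100) opCentral {k : Type*} [CommSemiring k] {V : Type*}
    [AddCommMonoid V] [Module k V] : IsCentralScalar k V :=
  ⟨fun _ _ => rfl⟩

open TensorProduct

attribute [local instance] Algebra.TensorProduct.rightAlgebra

universe u

/-- The surjection `π : A_V = A₀ ⊗ₖ (k ⊕ V) → A₀` induced by the projection `k ⊕ V → k`. -/
noncomputable def reductionMap (k : Type u) [Field k] (V : Type u) [AddCommGroup V]
    [Module k V] (A₀ : Type u) [CommRing A₀] [Algebra k A₀] :
    (A₀ ⊗[k] TrivSqZeroExt k V) →ₐ[k] A₀ :=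
  Algebra.TensorProduct.productMap (AlgHom.id k A₀)
    ((Algebra.ofId k A₀).comp (TrivSqZeroExt.fstHom k k V))

/-! ### The decomposition of `A ⊗ (k ⊕ V)` -/

section Decomposition

variable (k : Type u) [Field k] (V : Type u) [AddCommGroup V] [Module k V]
  (A : Type u) [CommRing A] [Algebra k A]

/-- The inclusion `A ⊗ V → A ⊗ (k ⊕ V)` of the kernel of `reductionMap`. -/
noncomputable def inclV : A ⊗[k] V →ₗ[A] A ⊗[k] TrivSqZeroExt k V :=
  TensorProduct.AlgebraTensorModule.map LinearMap.id (TrivSqZeroExt.inrHom k V)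

/-- The `A`-linear projection `A ⊗ (k ⊕ V) → A ⊗ V`, a retraction of `inclV`. -/
noncomputable def projV : A ⊗[k] TrivSqZeroExt k V →ₗ[A] A ⊗[k] V :=
  TensorProduct.AlgebraTensorModule.map LinearMap.id (TrivSqZeroExt.sndHom k V)

@[simp]
lemma reductionMap_tmul (a : A) (t : TrivSqZeroExt k V) :
    reductionMap k V A (a ⊗ₜ t) = t.fst • a := by
  simp [reductionMap, Algebra.ofId_apply, Algebra.smul_def, mul_comm]

@[simp]
lemma inclV_tmul (a : A) (v : V) : inclV k V A (a ⊗ₜ v) = a ⊗ₜ TrivSqZeroExt.inr v := rfl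

@[simp]
lemma projV_tmul (a : A) (t : TrivSqZeroExt k V) : projV k V A (a ⊗ₜ t) = a ⊗ₜ t.snd := rfl

@[simp]
lemma projV_inclV (w : A ⊗[k] V) : projV k V A (inclV k V A w) = w := by
  induction w with
  | zero => simp
  | tmul a v => simp
  | add x y hx hy => simp [hx, hy]

@[simp]
lemma reductionMap_inclV (w : A ⊗[k] V) : reductionMap k V A (inclV k V A w) = 0 := by
  induction w with
  | zero => simp
  | tmul a v => simp
  | add x y hx hy => simp [hx, hy]

lemma decomp (z : A ⊗[k] TrivSqZeroExt k V) :
    z = reductionMap k V A z ⊗ₜ 1 + inclV k V A (projV k V A z) := by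
  induction z with
  | zero => simp
  | tmul a t =>
    rw [reductionMap_tmul, projV_tmul, inclV_tmul, TensorProduct.smul_tmul,
      ← TensorProduct.tmul_add]
    congr 1
    ext <;> simp
  | add x y hx hy =>
    conv_lhs => rw [hx, hy]
    simp only [map_add, TensorProduct.add_tmul]
    abel

lemma reductionMap_surjective : Function.Surjective (reductionMap k V A) :=
  fun a => ⟨a ⊗ₜ 1, by simp⟩

/-- As `V² = 0`, the `V`-component of a product obeys the Leibniz rule. -/
lemma projV_mul (y z : A ⊗[k] TrivSqZeroExt k V) :
    projV k V A (y * z) =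
      reductionMap k V A y • projV k V A z + reductionMap k V A z • projV k V A y := by
  induction y with
  | zero => simp
  | add x y hx hy =>
    simp only [add_mul, map_add, add_smul, smul_add, hx, hy]
    abel
  | tmul a t =>
    induction z with
    | zero => simp
    | add x y hx hy =>
      simp only [mul_add, map_add, add_smul, smul_add, hx, hy]
      abel
    | tmul b s =>
      simp only [Algebra.TensorProduct.tmul_mul_tmul, projV_tmul, reductionMap_tmul,
        TensorProduct.smul_tmul', TrivSqZeroExt.snd_mul, TensorProduct.tmul_add,
        op_smul_eq_smul, TensorProduct.tmul_smul, smul_eq_mul, smul_mul_assoc, mul_comm b a]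

end Decomposition

/-! ### Flatness of the quotient and the intersection of `J` with `A₀ ⊗ V` -/

section Deformation

variable {k : Type u} [Field k] {V : Type u} [AddCommGroup V] [Module k V]
  {A₀ : Type u} [CommRing A₀] [Algebra k A₀]

variable (k V) in
/-- The reduction `A₀ ⊗ V → (A₀/I₀) ⊗ V`. -/
noncomputable def quotV (I₀ : Ideal A₀) : A₀ ⊗[k] V →ₗ[A₀] (A₀ ⧸ I₀) ⊗[k] V :=
  TensorProduct.AlgebraTensorModule.map (Submodule.mkQ I₀) LinearMap.id

@[simp]
lemma quotV_tmul (I₀ : Ideal A₀) (a : A₀) (v : V) :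
    quotV k V I₀ (a ⊗ₜ v) = (Ideal.Quotient.mk I₀ a) ⊗ₜ v := rfl

lemma quotV_surjective (I₀ : Ideal A₀) : Function.Surjective (quotV k V I₀) :=
  LinearMap.rTensor_surjective V (g := (Submodule.mkQ I₀).restrictScalars k)
    (Submodule.mkQ_surjective I₀)

lemma smul_quot_eq_zero {I₀ : Ideal A₀} {x : A₀} (hx : x ∈ I₀) (w : (A₀ ⧸ I₀) ⊗[k] V) :
    x • w = 0 := by
  induction w with
  | zero => simp
  | add y z hy hz => simp [hy, hz]
  | tmul b v =>
    rw [TensorProduct.smul_tmul', Algebra.smul_def, Ideal.Quotient.algebraMap_eq,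
      Ideal.Quotient.eq_zero_iff_mem.mpr hx, zero_mul, TensorProduct.zero_tmul]

lemma mem_map_reductionMap {J : Ideal (A₀ ⊗[k] TrivSqZeroExt k V)} {x : A₀} :
    x ∈ Ideal.map (reductionMap k V A₀) J ↔ ∃ y ∈ J, reductionMap k V A₀ y = x :=
  Ideal.mem_map_iff_of_surjective _ (reductionMap_surjective k V A₀)

lemma exists_mem_of_map_eq {I₀ : Ideal A₀} {J : Ideal (A₀ ⊗[k] TrivSqZeroExt k V)}
    (hJ : Ideal.map (reductionMap k V A₀) J = I₀) {x : A₀} (hx : x ∈ I₀) :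
    ∃ y ∈ J, reductionMap k V A₀ y = x := by
  subst hJ
  exact mem_map_reductionMap.mp hx

lemma smul_mk (J : Ideal (A₀ ⊗[k] TrivSqZeroExt k V)) (t : TrivSqZeroExt k V)
    (z : A₀ ⊗[k] TrivSqZeroExt k V) :
    t • Ideal.Quotient.mk J z = Ideal.Quotient.mk J (((1 : A₀) ⊗ₜ[k] t) * z) := rfl

/-- Multiplying lifts to `J` of elements of `I₀` by `V` shows that `J ⊇ I₀ ⊗ V`. -/
lemma inclV_mem {I₀ : Ideal A₀} {J : Ideal (A₀ ⊗[k] TrivSqZeroExt k V)}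
    (hJ : Ideal.map (reductionMap k V A₀) J = I₀) {w : A₀ ⊗[k] V}
    (hw : quotV k V I₀ w = 0) : inclV k V A₀ w ∈ J := by
  have hex := rTensor_exact V (f := (I₀.subtype).restrictScalars k)
    (g := (Submodule.mkQ I₀).restrictScalars k)
    (fun x => LinearMap.exact_subtype_mkQ I₀ x) (Submodule.mkQ_surjective I₀)
  obtain ⟨u, rfl⟩ := (hex w).mp hw
  clear hw
  induction u with
  | zero => simp
  | add x y hx hy => simpa using J.add_mem hx hy
  | tmul x v =>
    obtain ⟨y, hy, hyx⟩ := exists_mem_of_map_eq hJ x.2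
    have h := J.mul_mem_left ((1 : A₀) ⊗ₜ[k] (TrivSqZeroExt.inr v : TrivSqZeroExt k V)) hy
    have hz := decomp k V A₀ ((1 : A₀) ⊗ₜ[k] (TrivSqZeroExt.inr v : TrivSqZeroExt k V) * y)
    rw [projV_mul, map_mul, hyx] at hz
    simp only [reductionMap_tmul, TrivSqZeroExt.fst_inr, zero_smul, zero_mul,
      TensorProduct.zero_tmul, zero_add, projV_tmul, TrivSqZeroExt.snd_inr] at hz
    rw [hz] at h
    simpa [TensorProduct.smul_tmul'] using h

/-- Equational criterion for flatness over `k ⊕ V`, for relations whose coefficients form a basis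
of `V`: the coefficients `cᵢⱼ` trivialising such a relation lie in the maximal ideal `V`. -/
lemma exists_relation_of_flat {ι M : Type*} [Fintype ι] [AddCommGroup M]
    [Module (TrivSqZeroExt k V) M] [Module.Flat (TrivSqZeroExt k V) M]
    (b : Module.Basis ι k V) {m : ι → M}
    (h : ∑ i, (TrivSqZeroExt.inr (b i) : TrivSqZeroExt k V) • m i = 0) :
    ∃ (n : ℕ) (c : ι → Fin n → TrivSqZeroExt k V) (y : Fin n → M),
      (∀ i j, (c i j).fst = 0) ∧ ∀ i, m i = ∑ j, c i j • y j := by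
  obtain ⟨n, c, y, hy, hc⟩ := Module.Flat.isTrivialRelation_of_sum_smul_eq_zero h
  refine ⟨n, c, y, fun i j => ?_, hy⟩
  have h := congrArg (TrivSqZeroExt.sndHom k V) (hc j)
  rw [map_sum, map_zero] at h
  refine Fintype.linearIndependent_iff.mp b.linearIndependent (fun i => (c i j).fst) ?_ i
  simpa using h

/-- Writing `w = ∑ aᵢ ⊗ vᵢ` with `vᵢ` a basis of `V`, the relation `∑ vᵢ aᵢ = 0` modulo `J` forces
`aᵢ ∈ J + A₀ ⊗ V` by flatness, that is, `aᵢ ∈ I₀`. -/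
lemma quotV_eq_zero_of_flat [Module.Finite k V] {I₀ : Ideal A₀}
    {J : Ideal (A₀ ⊗[k] TrivSqZeroExt k V)}
    (hflat : Module.Flat (TrivSqZeroExt k V) ((A₀ ⊗[k] TrivSqZeroExt k V) ⧸ J))
    (hJ : Ideal.map (reductionMap k V A₀) J = I₀) {w : A₀ ⊗[k] V}
    (hw : inclV k V A₀ w ∈ J) : quotV k V I₀ w = 0 := by
  have b := Module.finBasis k V
  obtain ⟨a, rfl⟩ : ∃ a : Fin (Module.finrank k V) → A₀, w = ∑ i, a i ⊗ₜ b i := by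
    clear hw
    induction w with
    | zero => exact ⟨0, by simp⟩
    | add x y hx hy =>
      obtain ⟨f, rfl⟩ := hx
      obtain ⟨g, rfl⟩ := hy
      exact ⟨f + g, by simp [TensorProduct.add_tmul, Finset.sum_add_distrib]⟩
    | tmul x v =>
      refine ⟨fun i => b.repr v i • x, ?_⟩
      conv_lhs => rw [← b.sum_repr v]
      simp only [TensorProduct.tmul_sum, TensorProduct.tmul_smul, TensorProduct.smul_tmul']
  have hrel : ∑ i, (TrivSqZeroExt.inr (b i) : TrivSqZeroExt k V) •
      Ideal.Quotient.mk J (a i ⊗ₜ[k] (1 : TrivSqZeroExt k V)) = 0 := by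
    rw [← Ideal.Quotient.eq_zero_iff_mem] at hw
    rw [← hw, map_sum, map_sum]
    refine Finset.sum_congr rfl fun i _ => ?_
    rw [smul_mk, inclV_tmul, Algebra.TensorProduct.tmul_mul_tmul, one_mul, mul_one]
  obtain ⟨n, c, y, hc0, hy⟩ := exists_relation_of_flat b (m := fun i =>
    Ideal.Quotient.mk J (a i ⊗ₜ[k] (1 : TrivSqZeroExt k V))) hrel
  choose z hz using fun j => Ideal.Quotient.mk_surjective (y j)
  have ha : ∀ i, a i ∈ I₀ := fun i => by
    have hmem : a i ⊗ₜ[k] (1 : TrivSqZeroExt k V) - ∑ j, ((1 : A₀) ⊗ₜ[k] c i j) * z j ∈ J := by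
      rw [← Ideal.Quotient.eq, hy i, map_sum]
      refine Finset.sum_congr rfl fun j _ => ?_
      rw [← hz, smul_mk]
    have h := Ideal.mem_map_of_mem (reductionMap k V A₀) hmem
    rw [hJ] at h
    simpa [hc0] using h
  rw [map_sum]
  refine Finset.sum_eq_zero fun i _ => ?_
  rw [quotV_tmul, Ideal.Quotient.eq_zero_iff_mem.mpr (ha i), TensorProduct.zero_tmul]

/-- If `J ∩ (A₀ ⊗ V) = I₀ ⊗ V`, a `k`-linear section of `A₀ → A₀/I₀` induces an isomorphism from the
free module `(A₀/I₀) ⊗ (k ⊕ V)` onto the quotient by `J`. -/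
lemma flat_of_forall {I₀ : Ideal A₀} {J : Ideal (A₀ ⊗[k] TrivSqZeroExt k V)}
    (hJ : Ideal.map (reductionMap k V A₀) J = I₀)
    (h : ∀ w, inclV k V A₀ w ∈ J → quotV k V I₀ w = 0) :
    Module.Flat (TrivSqZeroExt k V) ((A₀ ⊗[k] TrivSqZeroExt k V) ⧸ J) := by
  obtain ⟨s, hs⟩ := LinearMap.exists_rightInverse_of_surjective
    ((Submodule.mkQ I₀).restrictScalars k)
    (LinearMap.range_eq_top.mpr (Submodule.mkQ_surjective I₀))
  have hs' : ∀ b, Ideal.Quotient.mk I₀ (s b) = b := fun b => LinearMap.congr_fun hs b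
  let sV : (A₀ ⧸ I₀) ⊗[k] V →ₗ[k] A₀ ⊗[k] V := LinearMap.rTensor V s
  have hsV : ∀ u, quotV k V I₀ (sV u) = u := fun u => by
    induction u with
    | zero => simp
    | add x y hx hy => simp [hx, hy]
    | tmul b v => simp [sV, hs']
  let sT : (A₀ ⧸ I₀) ⊗[k] TrivSqZeroExt k V →ₗ[TrivSqZeroExt k V] A₀ ⊗[k] TrivSqZeroExt k V :=
    { LinearMap.rTensor (TrivSqZeroExt k V) s with
      map_smul' := fun t x => by
        induction x with
        | zero => simp
        | add x y hx hy => simp_all [smul_add]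
        | tmul b r =>
          simp [Algebra.smul_def, Algebra.TensorProduct.right_algebraMap_apply] }
  have hsT : ∀ b t, sT (b ⊗ₜ t) = s b ⊗ₜ t := fun _ _ => rfl
  have hsT' : ∀ u, sT (inclV k V (A₀ ⧸ I₀) u) = inclV k V A₀ (sV u) := fun u => by
    induction u with
    | zero => simp
    | add x y hx hy => simp [hx, hy]
    | tmul b v => simp [sV, hsT]
  let F : (A₀ ⧸ I₀) ⊗[k] TrivSqZeroExt k V →ₗ[TrivSqZeroExt k V]
      (A₀ ⊗[k] TrivSqZeroExt k V) ⧸ J :=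
    ((Ideal.Quotient.mkₐ (TrivSqZeroExt k V) J).toLinearMap).comp sT
  have hF : ∀ x, F x = Ideal.Quotient.mk J (sT x) := fun _ => rfl
  have hinj : Function.Injective F := by
    rw [injective_iff_map_eq_zero]
    intro x hx
    rw [hF, Ideal.Quotient.eq_zero_iff_mem, decomp k V _ x, map_add, hsT, hsT'] at hx
    have h1 := Ideal.mem_map_of_mem (reductionMap k V A₀) hx
    rw [hJ, map_add, reductionMap_inclV, add_zero, reductionMap_tmul, TrivSqZeroExt.fst_one,
      one_smul, ← Ideal.Quotient.eq_zero_iff_mem, hs'] at h1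
    rw [h1, map_zero, TensorProduct.zero_tmul, zero_add] at hx
    have h2 := h _ hx
    rw [hsV] at h2
    rw [decomp k V _ x, h1, h2, TensorProduct.zero_tmul, map_zero, add_zero]
  have hsurj : Function.Surjective F := by
    intro m
    obtain ⟨z, rfl⟩ := Ideal.Quotient.mk_surjective m
    have hmem : reductionMap k V A₀ z - s (Ideal.Quotient.mk I₀ (reductionMap k V A₀ z)) ∈ I₀ := by
      rw [← Ideal.Quotient.eq, hs']
    obtain ⟨y, hy, hyz⟩ := exists_mem_of_map_eq hJ hmem
    refine ⟨(Ideal.Quotient.mk I₀ (reductionMap k V A₀ z)) ⊗ₜ 1 +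
      inclV k V _ (quotV k V I₀ (projV k V A₀ (z - y))), ?_⟩
    rw [hF, map_add, hsT, hsT', eq_comm, Ideal.Quotient.eq]
    set w := projV k V A₀ (z - y) with hw
    have h1 : inclV k V A₀ (w - sV (quotV k V I₀ w)) ∈ J :=
      inclV_mem hJ (by rw [map_sub, hsV, sub_self])
    have h2 := decomp k V A₀ (z - y)
    rw [← hw, map_sub, hyz, sub_sub_cancel] at h2
    have h3 := J.add_mem h1 hy
    convert h3 using 1
    rw [map_sub, ← sub_eq_zero]
    rw [← sub_eq_zero] at h2
    rw [← h2]
    abel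
  have : Module.Flat (TrivSqZeroExt k V) ((A₀ ⧸ I₀) ⊗[k] TrivSqZeroExt k V) :=
    Module.Flat.of_linearEquiv
      (Algebra.TensorProduct.commRight k (TrivSqZeroExt k V) (A₀ ⧸ I₀)).symm.toLinearEquiv
  exact Module.Flat.of_linearEquiv (LinearEquiv.ofBijective F ⟨hinj, hsurj⟩).symm

/-! ### The ideal attached to a homomorphism -/

/-- The ideal `{x + w | x ∈ I₀, w ∈ A₀ ⊗ V, φ x = w mod I₀}` attached to `φ`. -/
noncomputable def defIdeal {I₀ : Ideal A₀} (φ : I₀ →ₗ[A₀] (A₀ ⧸ I₀) ⊗[k] V) :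
    Ideal (A₀ ⊗[k] TrivSqZeroExt k V) where
  carrier := {z | ∃ h : reductionMap k V A₀ z ∈ I₀, φ ⟨_, h⟩ = quotV k V I₀ (projV k V A₀ z)}
  zero_mem' := by
    refine ⟨by simp, ?_⟩
    refine Eq.trans (congrArg φ (Subtype.ext (map_zero _) : _ = (0 : I₀))) ?_
    simp
  add_mem' := by
    rintro y z ⟨hy, hy'⟩ ⟨hz, hz'⟩
    refine ⟨by simpa using I₀.add_mem hy hz, ?_⟩
    rw [map_add (projV k V A₀), map_add (quotV k V I₀), ← hy', ← hz', ← map_add φ]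
    exact congrArg φ (Subtype.ext (map_add _ _ _))
  smul_mem' := by
    rintro y z ⟨hz, hz'⟩
    refine ⟨by simpa using I₀.mul_mem_left _ hz, ?_⟩
    have h : quotV k V I₀ (projV k V A₀ (y • z)) =
        reductionMap k V A₀ y • quotV k V I₀ (projV k V A₀ z) := by
      rw [smul_eq_mul, projV_mul, map_add, map_smul, map_smul, smul_quot_eq_zero hz, add_zero]
    rw [h, ← hz', ← map_smul φ]
    exact congrArg φ (Subtype.ext (map_mul _ _ _))

lemma mem_defIdeal {I₀ : Ideal A₀} {φ : I₀ →ₗ[A₀] (A₀ ⧸ I₀) ⊗[k] V}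
    {z : A₀ ⊗[k] TrivSqZeroExt k V} : z ∈ defIdeal φ ↔
      ∃ h : reductionMap k V A₀ z ∈ I₀, φ ⟨_, h⟩ = quotV k V I₀ (projV k V A₀ z) := Iff.rfl

lemma mem_defIdeal_of {I₀ : Ideal A₀} {φ : I₀ →ₗ[A₀] (A₀ ⧸ I₀) ⊗[k] V} (x : I₀)
    {z : A₀ ⊗[k] TrivSqZeroExt k V} (hz : reductionMap k V A₀ z = x) :
    z ∈ defIdeal φ ↔ φ x = quotV k V I₀ (projV k V A₀ z) := by
  obtain ⟨x, hx⟩ := x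
  subst hz
  exact ⟨fun ⟨_, h⟩ => h, fun h => ⟨hx, h⟩⟩

/-- Over each `x ∈ I₀` there is an element of `defIdeal φ`, and its `V`-component determines
`φ x`. -/
lemma exists_lift {I₀ : Ideal A₀} (φ : I₀ →ₗ[A₀] (A₀ ⧸ I₀) ⊗[k] V) (x : I₀) :
    ∃ z ∈ defIdeal φ, reductionMap k V A₀ z = x ∧ φ x = quotV k V I₀ (projV k V A₀ z) := by
  obtain ⟨w, hw⟩ := quotV_surjective (k := k) (V := V) I₀ (φ x)
  have h1 : reductionMap k V A₀ ((x : A₀) ⊗ₜ 1 + inclV k V A₀ w) = x := by simp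
  have h2 : φ x = quotV k V I₀ (projV k V A₀ ((x : A₀) ⊗ₜ 1 + inclV k V A₀ w)) := by
    simp [hw]
  exact ⟨_, (mem_defIdeal_of x h1).mpr h2, h1, h2⟩

lemma map_defIdeal {I₀ : Ideal A₀} (φ : I₀ →ₗ[A₀] (A₀ ⧸ I₀) ⊗[k] V) :
    Ideal.map (reductionMap k V A₀) (defIdeal φ) = I₀ := by
  ext x
  rw [mem_map_reductionMap]
  constructor
  · rintro ⟨y, ⟨hy, -⟩, rfl⟩
    exact hy
  · intro hx
    obtain ⟨z, hz, hzx, -⟩ := exists_lift φ ⟨x, hx⟩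
    exact ⟨z, hz, hzx⟩

lemma flat_defIdeal {I₀ : Ideal A₀} (φ : I₀ →ₗ[A₀] (A₀ ⧸ I₀) ⊗[k] V) :
    Module.Flat (TrivSqZeroExt k V) ((A₀ ⊗[k] TrivSqZeroExt k V) ⧸ defIdeal φ) := by
  refine flat_of_forall (map_defIdeal φ) fun w hw => ?_
  rw [mem_defIdeal_of 0 (by simp)] at hw
  simpa using hw.symm

lemma defIdeal_injective {I₀ : Ideal A₀} {φ ψ : I₀ →ₗ[A₀] (A₀ ⧸ I₀) ⊗[k] V}
    (h : defIdeal φ = defIdeal ψ) : φ = ψ := by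
  ext x
  obtain ⟨z, hz, hzx, hφ⟩ := exists_lift φ x
  rw [h, mem_defIdeal_of x hzx] at hz
  rw [hφ, hz]

lemma exists_defIdeal_eq [Module.Finite k V] {I₀ : Ideal A₀}
    {J : Ideal (A₀ ⊗[k] TrivSqZeroExt k V)}
    (hflat : Module.Flat (TrivSqZeroExt k V) ((A₀ ⊗[k] TrivSqZeroExt k V) ⧸ J))
    (hJ : Ideal.map (reductionMap k V A₀) J = I₀) :
    ∃ φ : I₀ →ₗ[A₀] (A₀ ⧸ I₀) ⊗[k] V, defIdeal φ = J := by
  have key : ∀ y z, reductionMap k V A₀ y = reductionMap k V A₀ z →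
      inclV k V A₀ (projV k V A₀ (y - z)) = y - z := fun y z hyz => by
    have := decomp k V A₀ (y - z)
    rw [map_sub, hyz, sub_self, TensorProduct.zero_tmul, zero_add] at this
    exact this.symm
  have lift : ∀ x : I₀, ∃ y ∈ J, reductionMap k V A₀ y = x := fun x =>
    exists_mem_of_map_eq hJ x.2
  choose f hfJ hf using lift
  have uniq : ∀ (x : I₀) (y), y ∈ J → reductionMap k V A₀ y = x →
      quotV k V I₀ (projV k V A₀ (f x)) = quotV k V I₀ (projV k V A₀ y) := fun x y hy hyx => by
    rw [← sub_eq_zero, ← map_sub, ← map_sub]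
    refine quotV_eq_zero_of_flat hflat hJ ?_
    rw [key _ _ ((hf x).trans hyx.symm)]
    exact J.sub_mem (hfJ x) hy
  let φ : I₀ →ₗ[A₀] (A₀ ⧸ I₀) ⊗[k] V :=
    { toFun := fun x => quotV k V I₀ (projV k V A₀ (f x))
      map_add' := fun x y => by
        rw [uniq (x + y) (f x + f y) (J.add_mem (hfJ x) (hfJ y)) (by simp [hf]), map_add, map_add]
      map_smul' := fun a x => by
        rw [uniq (a • x) ((a ⊗ₜ 1) * f x) (J.mul_mem_left _ (hfJ x)) (by simp [hf]), projV_mul]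
        simp }
  refine ⟨φ, ?_⟩
  ext z
  constructor
  · rintro ⟨hz, hφ⟩
    have hfz := hf ⟨_, hz⟩
    have h0 : quotV k V I₀ (projV k V A₀ (z - f ⟨_, hz⟩)) = 0 := by
      rw [map_sub, map_sub, ← hφ, sub_eq_zero]
      rfl
    have := inclV_mem hJ h0
    rw [key _ _ hfz.symm] at this
    simpa using J.add_mem this (hfJ ⟨_, hz⟩)
  · intro hz
    have hmem : reductionMap k V A₀ z ∈ I₀ := hJ ▸ Ideal.mem_map_of_mem _ hz
    exact ⟨hmem, uniq ⟨_, hmem⟩ z hz rfl⟩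

end Deformation


/-- **Statement 13.**  Let `k` be a field, `V` a finite-dimensional `k`-vector space,
`A₀` a commutative `k`-algebra and `I₀ ⊆ A₀` an ideal.  The set of ideals `J` of
`A_V := A₀ ⊗ₖ (k ⊕ V)` such that `A_V/J` is flat over `k ⊕ V` and `π(J) = I₀` is in
bijection with the set of `A₀`-module homomorphisms `I₀ → (A₀/I₀) ⊗ₖ V`
(the first-order embedded deformations of the closed subscheme defined by `I₀`). -/
theorem first_order_embedded_deformations
    (k : Type u) [Field k] (V : Type u) [AddCommGroup V] [Module k V] [Module.Finite k V]
    (A₀ : Type u) [CommRing A₀] [Algebra k A₀] (I₀ : Ideal A₀) :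
    Nonempty (
      {J : Ideal (A₀ ⊗[k] TrivSqZeroExt k V) //
          Module.Flat (TrivSqZeroExt k V) ((A₀ ⊗[k] TrivSqZeroExt k V) ⧸ J) ∧
          Ideal.map (reductionMap k V A₀) J = I₀} ≃
        (↥I₀ →ₗ[A₀] ((A₀ ⧸ I₀) ⊗[k] V))) := by
  refine ⟨(Equiv.ofBijective (fun φ : ↥I₀ →ₗ[A₀] ((A₀ ⧸ I₀) ⊗[k] V) =>
    ⟨defIdeal φ, flat_defIdeal φ, map_defIdeal φ⟩) ⟨?_, ?_⟩).symm⟩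
  · intro φ ψ h
    exact defIdeal_injective (congrArg Subtype.val h)
  · rintro ⟨J, hflat, hJ⟩
    obtain ⟨φ, hφ⟩ := exists_defIdeal_eq hflat hJ
    exact ⟨φ, Subtype.ext hφ⟩
end
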